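/- Let A be a local ring whose residue field has at least four elements, let I be a proper ideal of A and set R := A/I. Then the cokernel of the map H₂(Γ₀(I), ℤ) → H₂(SL₂(A), ℤ) induced by the inclusion Γ₀(I) ⊆ SL₂(A) is naturally isomorphic to I²(R); that is, there is an exact sequence H₂(Γ₀(I), ℤ) → H₂(SL₂(A), ℤ) → I²(R) → 0. -/

import Mathlib

/-!
`SL₂(A)` acts on the projective line `SL₂(A) ⧸ Γ₀(I)` of `A ⧸ I`. To three points in general
position, that is, with pairwise distinct reductions to the residue field, one attaches the square
class `d` of the product of the three determinants of pairs of representing vectors. By the Plücker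
relation and the Steinberg relation, `⟨d⟩` is a triple cocycle with values in `GW(A ⧸ I)`. As the
residue field has at least four elements, points can be chosen in general position to any given
ones, so that the triple cocycle has a primitive on pairs and transgresses to a class in
`H²(SL₂(A), GW(A ⧸ I))`; the connecting map sends `H₂(SL₂(A), ℤ)` to `GW(A ⧸ I)`.

Here `⟨d⟩ = 1 + ⟨⟨d⟩⟩`, and modulo `I²(A ⧸ I)` the term `⟨⟨d⟩⟩` is additive in `d`. So the cocycle
has the explicit primitive `1 + ⟨⟨det x y⟩⟩`, and its transgression vanishes: the map lands in
`I²(A ⧸ I)`. Conversely, a character of `GW(A ⧸ I)` with vanishing transgression has the shape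
`n + ε(d)` for a character `ε` of order two, so it kills `I²(A ⧸ I)`; as `ℚ/ℤ` separates elements
from subgroups, the image is all of `I²(A ⧸ I)`.

By the same duality, for the kernel it suffices to treat the classes in `H²(SL₂(A), ℚ/ℤ)`
which vanish on `Γ₀(I)`. Such a class is trivialized on the projective line, and then, after
correction by a character of the multipliers, also on pairs of points, so that it is the
transgression of an invariant triple cocycle. An invariant function of triples depends on `d`
only, and for it the cocycle condition is the Steinberg relation, so it factors through `⟨d⟩`.
-/

noncomputable section

/-- The group of square classes `R^× / (R^×)²`, denoted `G_R`. -/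
def SqCl (R : Type*) [CommRing R] : Type _ :=
  Rˣ ⧸ (powMonoidHom 2 : Rˣ →* Rˣ).range

instance (R : Type*) [CommRing R] : CommGroup (SqCl R) :=
  QuotientGroup.Quotient.commGroup _

/-- The class of a unit in the group of square classes. -/
def sqc {R : Type*} [CommRing R] (u : Rˣ) : SqCl R := QuotientGroup.mk u

/-- The group ring `κ[G_R]` of square classes, denoted `R_R` in the paper (for `κ = ℤ`;
for `κ = ℤ[1/2]` it is `R_R[1/2]`). -/
abbrev GRing (κ : Type*) [CommRing κ] (R : Type*) [CommRing R] : Type _ :=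
  MonoidAlgebra κ (SqCl R)

/-- `⟨u⟩`, the square class of a unit `u` viewed in the group ring. -/
def gcl (κ : Type*) [CommRing κ] {R : Type*} [CommRing R] (u : Rˣ) : GRing κ R :=
  MonoidAlgebra.of κ (SqCl R) (sqc u)

/-- `⟨⟨u⟩⟩ := ⟨u⟩ - 1`. -/
def gcc (κ : Type*) [CommRing κ] {R : Type*} [CommRing R] (u : Rˣ) : GRing κ R :=
  gcl κ u - 1

/-- The augmentation ideal `I_R`, generated by the elements `g - 1`, `g ∈ G_R`. -/
def augId (κ : Type*) [CommRing κ] (R : Type*) [CommRing R] : Ideal (GRing κ R) :=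
  Ideal.span (Set.range fun g : SqCl R => (MonoidAlgebra.of κ (SqCl R) g - 1))

/-- `p₋₁⁺ := ⟨-1⟩ + 1`. -/
def pminus (κ : Type*) [CommRing κ] (R : Type*) [CommRing R] : GRing κ R :=
  gcl κ (-1 : Rˣ) + 1

/-- `W_R = {a ∈ R^× : 1 - a ∈ R^×}`. -/
def WU (R : Type*) [CommRing R] : Type _ := {a : Rˣ // IsUnit ((1 : R) - (a : R))}

namespace WU

variable {R : Type*} [CommRing R]

instance : CoeHead (WU R) Rˣ := ⟨Subtype.val⟩

/-- `1 - a` as a unit, for `a ∈ W_R`. -/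
def usub (a : WU R) : Rˣ := a.2.unit

@[simp] lemma usub_coe (a : WU R) : ((usub a : Rˣ) : R) = 1 - ((a : Rˣ) : R) := a.2.unit_spec

/-- `a - 1` as a unit, for `a ∈ W_R`. -/
def usub' (a : WU R) : Rˣ := -usub a

/-- `a⁻¹ - 1` as a unit, for `a ∈ W_R`. -/
def uinvsub (a : WU R) : Rˣ := (a : Rˣ)⁻¹ * usub a

/-- `1 - a ∈ W_R` when `a ∈ W_R`. -/
def oneSub (a : WU R) : WU R :=
  ⟨usub a, by rw [usub_coe, sub_sub_cancel]; exact (a : Rˣ).isUnit⟩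

/-- `a⁻¹ ∈ W_R` when `a ∈ W_R`. -/
def winv (a : WU R) : WU R := by
  refine ⟨(a : Rˣ)⁻¹, ?_⟩
  have h : (((((a : Rˣ)⁻¹ * (-usub a)) : Rˣ)) : R) = 1 - (((a : Rˣ)⁻¹ : Rˣ) : R) := by
    have h1 := Units.inv_mul (a : Rˣ)
    push_cast [usub_coe]
    linear_combination h1
  rw [← h]; exact Units.isUnit _

/-- The image of an element of `W_A` under a ring homomorphism `A → B` carrying units to
units, as an element of `W_B`. -/
def mapRH {A B : Type*} [CommRing A] [CommRing B] (f : A →+* B) (a : WU A) : WU B :=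
  ⟨Units.map (f : A →* B) (a : Aˣ), by
    have h := a.2.map f
    rw [map_sub, map_one] at h
    simpa using h⟩

end WU

/-- The free `R_R`-module on the symbols `[a]`, `a ∈ W_R`. -/
abbrev preRP (κ : Type*) [CommRing κ] (R : Type*) [CommRing R] : Type _ :=
  WU R →₀ GRing κ R

/-- The basis element `[a]` of the free module. -/
def pregen (κ : Type*) [CommRing κ] {R : Type*} [CommRing R] (a : WU R) : preRP κ R :=
  Finsupp.single a 1

/-- The set of defining relations of `RP(R)`:  the elements
`[a] - [b] + ⟨a⟩[b/a] - ⟨a⁻¹-1⟩[(1-a⁻¹)/(1-b⁻¹)] - ⟨1-a⟩[(1-a)/(1-b)]`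
whenever `a, b, a/b ∈ W_R` (here `c = b/a`, `d = (1-a⁻¹)/(1-b⁻¹)`, `e = (1-a)/(1-b)`). -/
def RPrel (κ : Type*) [CommRing κ] (R : Type*) [CommRing R] : Set (preRP κ R) :=
  { x | ∃ a b c d e : WU R,
      ((c : Rˣ) : R) * ((a : Rˣ) : R) = ((b : Rˣ) : R) ∧
      ((d : Rˣ) : R) * (1 - (((b : Rˣ)⁻¹ : Rˣ) : R)) = 1 - (((a : Rˣ)⁻¹ : Rˣ) : R) ∧
      ((e : Rˣ) : R) * (1 - ((b : Rˣ) : R)) = 1 - ((a : Rˣ) : R) ∧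
      x = pregen κ a - pregen κ b + gcl κ (a : Rˣ) • pregen κ c
          - gcl κ (WU.uinvsub a) • pregen κ d - gcl κ (WU.usub a) • pregen κ e }

/-- The submodule of relations. -/
def RPsub (κ : Type*) [CommRing κ] (R : Type*) [CommRing R] :
    Submodule (GRing κ R) (preRP κ R) :=
  Submodule.span (GRing κ R) (RPrel κ R)

/-- The refined pre-Bloch group (refined scissors congruence group) `RP(R)`,
as a module over the group ring `R_R`. -/
abbrev RP (κ : Type*) [CommRing κ] (R : Type*) [CommRing R] : Type _ :=
  preRP κ R ⧸ RPsub κ R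

/-- The generator `[a]` of `RP(R)`. -/
def rp (κ : Type*) [CommRing κ] {R : Type*} [CommRing R] (a : WU R) : RP κ R :=
  Submodule.Quotient.mk (pregen κ a)

/-- The map `λ₁ : [a] ↦ ⟨⟨a⟩⟩⟨⟨1-a⟩⟩`, defined on the free module. -/
def lamOne (κ : Type*) [CommRing κ] (R : Type*) [CommRing R] :
    preRP κ R →ₗ[GRing κ R] GRing κ R :=
  Finsupp.linearCombination (GRing κ R)
    (fun a => gcc κ (a : Rˣ) * gcc κ (WU.usub a))

/-- The refined scissors congruence group `RP₁(R) = ker λ₁`, as a submodule of `RP(R)`. -/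
def RP1 (κ : Type*) [CommRing κ] (R : Type*) [CommRing R] : Submodule (GRing κ R) (RP κ R) :=
  Submodule.map (RPsub κ R).mkQ (LinearMap.ker (lamOne κ R))

/-- `ψ₁(a) = [a] + ⟨-1⟩[a⁻¹]` for `a ∈ W_R`. -/
def psiOne (κ : Type*) [CommRing κ] {R : Type*} [CommRing R] (a : WU R) : RP κ R :=
  rp κ a + gcl κ (-1 : Rˣ) • rp κ (WU.winv a)

/-- The submodule `K_R^{(1)}` generated by the elements `ψ₁(a)`, `a ∈ R^×`
(equivalently, by the `ψ₁(a)`, `a ∈ W_R`). -/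
def Kpsi (κ : Type*) [CommRing κ] (R : Type*) [CommRing R] : Submodule (GRing κ R) (RP κ R) :=
  Submodule.span (GRing κ R) { x | ∃ a : WU R, x = psiOne κ a }

/-- `\widetilde{RP}(R) := RP(R)/K_R^{(1)}`. -/
abbrev RPt (κ : Type*) [CommRing κ] (R : Type*) [CommRing R] : Type _ :=
  RP κ R ⧸ Kpsi κ R

/-- The generator `[a]` of `\widetilde{RP}(R)`. -/
def rpt (κ : Type*) [CommRing κ] {R : Type*} [CommRing R] (a : WU R) : RPt κ R :=
  Submodule.Quotient.mk (rp κ a)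

/-- The ideal `p₋₁⁺ I_R` of the group ring. -/
def pIdeal (κ : Type*) [CommRing κ] (R : Type*) [CommRing R] : Ideal (GRing κ R) :=
  augId κ R * Ideal.span {pminus κ R}

/-- `\widetilde{RP}₁(R) = ker(λ̃₁ : \widetilde{RP}(R) → I_R²/p₋₁⁺I_R)` as a submodule
of `\widetilde{RP}(R)`. -/
def RPt1 (κ : Type*) [CommRing κ] (R : Type*) [CommRing R] :
    Submodule (GRing κ R) (RPt κ R) :=
  Submodule.map ((Kpsi κ R).mkQ ∘ₗ (RPsub κ R).mkQ)
    (Submodule.comap (lamOne κ R) (pIdeal κ R))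

/-- The expression `C_R(a) = [a] + ⟨-1⟩[1-a] + ⟨⟨1-a⟩⟩ψ₁(a)`;  the constant `C_R ∈ RP(R)` is
this element, for any (every) choice of `a ∈ W_R`. -/
def Cexpr (κ : Type*) [CommRing κ] {R : Type*} [CommRing R] (a : WU R) : RP κ R :=
  rp κ a + gcl κ (-1 : Rˣ) • rp κ (WU.oneSub a) + gcc κ (WU.usub a) • psiOne κ a

/-- `ℤ[1/2]`, the localization of `ℤ` away from `2`. -/
abbrev Half : Type := Localization.Away (2 : ℤ)

/-- A field is *sufficiently large* if it is infinite, or finite with `p^d` elements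
where `d(p-1) > 6`. -/
def SuffLarge (k : Type*) : Prop :=
  Infinite k ∨ ∃ p d : ℕ, p.Prime ∧ Nat.card k = p ^ d ∧ 6 < d * (p - 1)

/-- The map on square classes induced by a ring homomorphism. -/
def sqMapRH {A B : Type*} [CommRing A] [CommRing B] (f : A →+* B) : SqCl A →* SqCl B :=
  QuotientGroup.map _ _ (Units.map (f : A →* B))
    (by
      rintro x ⟨y, rfl⟩
      exact ⟨Units.map (f : A →* B) y, by simp [powMonoidHom]⟩)

/-- For a module `M` over the group ring `κ[G_R]`, a group `G₀` mapping to `G_R` and a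
character `χ : G₀ → {±1}`, this is the subgroup `R^χ M` generated by the elements
`g•m - χ(g)m`.  The quotient `M_χ = M/R^χM` is `M ⧸ chSub ...`. -/
def chSub (κ : Type*) [CommRing κ] {R : Type*} [CommRing R] {G₀ : Type*} [Group G₀]
    (t : G₀ →* SqCl R) (χ : G₀ →* ℤˣ)
    (M : Type*) [AddCommGroup M] [Module (GRing κ R) M] : Submodule ℤ M :=
  Submodule.span ℤ
    {x | ∃ (g : G₀) (m : M),
      x = (MonoidAlgebra.of κ (SqCl R) (t g)) • m - ((χ g : ℤ) : ℤ) • m}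

/-- The Steinberg ideal `⟨⟨⟨a⟩⟩⟨⟨1-a⟩⟩ : a ∈ W_R⟩` of the group ring. -/
def StRel (κ : Type*) [CommRing κ] (R : Type*) [CommRing R] : Ideal (GRing κ R) :=
  Ideal.span {x | ∃ a : WU R, x = gcc κ ((a : Rˣ)) * gcc κ (WU.usub a)}

/-- The Grothendieck–Witt ring `GW(R) = κ[G_R]/⟨⟨⟨a⟩⟩⟨⟨1-a⟩⟩⟩`. -/
abbrev GWq (κ : Type*) [CommRing κ] (R : Type*) [CommRing R] : Type _ :=
  GRing κ R ⧸ StRel κ R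

/-- The fundamental ideal `I(R)` of the Grothendieck–Witt ring. -/
def IfundGW (κ : Type*) [CommRing κ] (R : Type*) [CommRing R] : Ideal (GWq κ R) :=
  (augId κ R).map (Ideal.Quotient.mk (StRel κ R))

/-- The relations of the classical scissors congruence group `P(R)`:
`[a] - [b] + [b/a] - [(1-a⁻¹)/(1-b⁻¹)] + [(1-a)/(1-b)]`. -/
def PRel (κ : Type*) [CommRing κ] (R : Type*) [CommRing R] : Set (WU R →₀ κ) :=
  { x | ∃ a b c d e : WU R,
      ((c : Rˣ) : R) * ((a : Rˣ) : R) = ((b : Rˣ) : R) ∧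
      ((d : Rˣ) : R) * (1 - (((b : Rˣ)⁻¹ : Rˣ) : R)) = 1 - (((a : Rˣ)⁻¹ : Rˣ) : R) ∧
      ((e : Rˣ) : R) * (1 - ((b : Rˣ) : R)) = 1 - ((a : Rˣ) : R) ∧
      x = Finsupp.single a 1 - Finsupp.single b 1 + Finsupp.single c 1
          - Finsupp.single d 1 + Finsupp.single e 1 }

/-- The scissors congruence group (pre-Bloch group) `P(R)` of Dupont–Sah. -/
abbrev Pgrp (κ : Type*) [CommRing κ] (R : Type*) [CommRing R] : Type _ :=
  (WU R →₀ κ) ⧸ Submodule.span κ (PRel κ R)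

/-- The generator `[a]` of `P(R)`. -/
def pcl (κ : Type*) [CommRing κ] {R : Type*} [CommRing R] (a : WU R) : Pgrp κ R :=
  Submodule.Quotient.mk (Finsupp.single a 1)

/-- The subgroup `K_R` of `P(R)` generated by the elements `{a} = [a] + [a⁻¹]`. -/
def PKsub (κ : Type*) [CommRing κ] (R : Type*) [CommRing R] : Submodule κ (Pgrp κ R) :=
  Submodule.span κ {x | ∃ a : WU R, x = pcl κ a + pcl κ (WU.winv a)}

/-- `\widetilde{P}(R) := P(R)/K_R`. -/
abbrev Ptld (κ : Type*) [CommRing κ] (R : Type*) [CommRing R] : Type _ :=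
  Pgrp κ R ⧸ PKsub κ R

/-- The generator `[a]` of `\widetilde{P}(R)`. -/
def ptcl (κ : Type*) [CommRing κ] {R : Type*} [CommRing R] (a : WU R) : Ptld κ R :=
  Submodule.Quotient.mk (pcl κ a)

namespace GroupHomology

variable (κ : Type*) [CommRing κ] (G : Type*) [Group G]

/-- The group of `n`-chains of the (inhomogeneous) bar complex of `G` with coefficients
in `κ`: the free `κ`-module on `n`-tuples of elements of `G`. -/
abbrev Ch (n : ℕ) : Type _ := (Fin n → G) →₀ κ

variable {G}

/-- The `i`-th face of an `(n+1)`-tuple (`0 ≤ i ≤ n+1`): drop the first entry (`i = 0`),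
drop the last entry (`i = n+1`), or multiply two consecutive entries. -/
def face {n : ℕ} (i : ℕ) (g : Fin (n + 1) → G) : Fin n → G := fun m =>
  if ((m : ℕ) + 1 : ℕ) < i then g m.castSucc
  else if ((m : ℕ) + 1 : ℕ) = i then g m.castSucc * g m.succ
  else g m.succ

variable (G)

/-- The value of the bar differential on a basis element. -/
def dfun {n : ℕ} (g : Fin (n + 1) → G) : Ch κ G n :=
  ∑ i ∈ Finset.range (n + 2), ((-1 : κ) ^ i) • Finsupp.single (face i g) (1 : κ)

/-- The differential of the bar complex. -/
def dd (n : ℕ) : Ch κ G (n + 1) →ₗ[κ] Ch κ G n :=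
  Finsupp.linearCombination κ (dfun κ G)

/-- The cycles of the bar complex (`Z_0` is everything). -/
def cycles : (n : ℕ) → Submodule κ (Ch κ G n)
  | 0 => ⊤
  | (n + 1) => LinearMap.ker (dd κ G n)

/-- The quotient of `n`-chains by `n`-boundaries. -/
abbrev ChQ (n : ℕ) : Type _ := Ch κ G n ⧸ LinearMap.range (dd κ G n)

/-- The `n`-th homology of `G` with coefficients in `κ`: cycles modulo boundaries,
realized as the image of the cycles in the quotient of chains by boundaries. -/
def Hsub (n : ℕ) : Submodule κ (ChQ κ G n) :=
  Submodule.map (LinearMap.range (dd κ G n)).mkQ (cycles κ G n)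

/-- The `n`-th homology of `G` with coefficients in `κ`. -/
abbrev H (n : ℕ) : Type _ := ↥(Hsub κ G n)

/-- The homology class of a cycle. -/
def hcl {n : ℕ} (x : Ch κ G n) (hx : x ∈ cycles κ G n) : H κ G n :=
  ⟨Submodule.Quotient.mk x, Submodule.mem_map_of_mem hx⟩

variable {G} {G' : Type*} [Group G']

/-- The chain map induced by a group homomorphism. -/
def chmap (f : G →* G') (n : ℕ) : Ch κ G n →ₗ[κ] Ch κ G' n :=
  Finsupp.lmapDomain κ κ (fun g => (f : G → G') ∘ g)

lemma face_comp (f : G →* G') {n : ℕ} (i : ℕ) (g : Fin (n + 1) → G) :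
    face i ((f : G → G') ∘ g) = (f : G → G') ∘ face i g := by
  funext m
  simp only [Function.comp_apply]
  unfold face
  by_cases h1 : ((m : ℕ) + 1 : ℕ) < i
  · simp [h1]
  · by_cases h2 : ((m : ℕ) + 1 : ℕ) = i
    · simp [h1, h2, map_mul]
    · simp [h1, h2]

lemma chmap_single (f : G →* G') {n : ℕ} (g : Fin n → G) (c : κ) :
    chmap κ f n (Finsupp.single g c) = Finsupp.single ((f : G → G') ∘ g) c := by
  simp [chmap, Finsupp.lmapDomain_apply, Finsupp.mapDomain_single]

lemma dd_single {n : ℕ} (g : Fin (n + 1) → G) :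
    dd κ G n (Finsupp.single g 1) = dfun κ G g := by
  simp [dd, Finsupp.linearCombination_single]

lemma chmap_comm (f : G →* G') (n : ℕ) :
    (dd κ G' n) ∘ₗ (chmap κ f (n + 1)) = (chmap κ f n) ∘ₗ (dd κ G n) := by
  refine Finsupp.lhom_ext' (fun g => LinearMap.ext_ring ?_)
  simp only [LinearMap.comp_apply, Finsupp.lsingle_apply]
  rw [chmap_single, dd_single, dd_single]
  unfold dfun
  rw [map_sum]
  refine Finset.sum_congr rfl (fun i _ => ?_)
  rw [map_smul, chmap_single, face_comp]

lemma chmap_comm_apply (f : G →* G') (n : ℕ) (x : Ch κ G (n + 1)) :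
    dd κ G' n (chmap κ f (n + 1) x) = chmap κ f n (dd κ G n x) :=
  DFunLike.congr_fun (chmap_comm κ f n) x

lemma chmap_cycles (f : G →* G') (n : ℕ) {x : Ch κ G n} (hx : x ∈ cycles κ G n) :
    chmap κ f n x ∈ cycles κ G' n := by
  cases n with
  | zero => trivial
  | succ n =>
      simp only [cycles, LinearMap.mem_ker] at hx ⊢
      rw [chmap_comm_apply, hx, map_zero]

/-- The map induced on the quotients of chains by boundaries. -/
def chqmap (f : G →* G') (n : ℕ) : ChQ κ G n →ₗ[κ] ChQ κ G' n :=
  Submodule.mapQ _ _ (chmap κ f n)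
    (by
      rintro x ⟨y, hy⟩
      exact ⟨chmap κ f (n + 1) y, by rw [← hy, chmap_comm_apply]⟩)

/-- The map induced on homology by a group homomorphism. -/
def Hmap (f : G →* G') (n : ℕ) : H κ G n →ₗ[κ] H κ G' n :=
  (chqmap κ f n).restrict (p := Hsub κ G n) (q := Hsub κ G' n)
    (by
      rintro x ⟨y, hy, rfl⟩
      exact ⟨chmap κ f n y, chmap_cycles κ f n hy, rfl⟩)

lemma Hmap_hcl (f : G →* G') (n : ℕ) (x : Ch κ G n) (hx : x ∈ cycles κ G n) :
    Hmap κ f n (hcl κ G x hx) = hcl κ G' (chmap κ f n x) (chmap_cycles κ f n hx) := rfl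


/-- The 2-chain `[(s|t)] - [(t|s)]` is a cycle when `s` and `t` commute. -/
lemma pont_mem_cycles {s t : G} (h : s * t = t * s) :
    (Finsupp.single ![s, t] (1 : κ) - Finsupp.single ![t, s] 1) ∈ cycles κ G 2 := by
  have hc : cycles κ G 2 = LinearMap.ker (dd κ G 1) := rfl
  rw [hc, LinearMap.mem_ker, map_sub, dd_single, dd_single]
  have key : ∀ a b : G, dfun κ G ![a, b] =
      Finsupp.single ![b] 1 - Finsupp.single ![a * b] 1 + Finsupp.single ![a] 1 := by
    intro a b
    have f0 : face 0 ![a, b] = ![b] := by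
      funext m; fin_cases m; simp [face]
    have f1 : face 1 ![a, b] = ![a * b] := by
      funext m; fin_cases m; simp [face]
    have f2 : face 2 ![a, b] = ![a] := by
      funext m; fin_cases m; simp [face]
    unfold dfun
    rw [show (1 : ℕ) + 2 = 3 from rfl, Finset.sum_range_succ, Finset.sum_range_succ,
      Finset.sum_range_one, f0, f1, f2]
    simp only [pow_zero, pow_one, one_smul]
    module
  rw [key, key, h]
  abel

/-- The Pontryagin (pontrjagin) product `c(s,t) ∈ H₂(G)` of two commuting elements of `G`:
the image of the canonical generator of `H₂(ℤ²)` under `(m,n) ↦ s^m t^n`,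
i.e. the class of the cycle `[(s|t)] - [(t|s)]`. -/
def pontryagin (s t : G) (h : s * t = t * s) : H κ G 2 :=
  hcl κ G _ (pont_mem_cycles κ h)

end GroupHomology

/-- `SL₂(R)`. -/
abbrev SL2 (R : Type*) [CommRing R] : Type _ := Matrix.SpecialLinearGroup (Fin 2) R

/-- The congruence subgroup `Γ₀(I) = { (a b; c d) ∈ SL₂(A) : c ∈ I }`. -/
def Gamma0 {A : Type*} [CommRing A] (I : Ideal A) : Subgroup (SL2 A) where
  carrier := { g | (g : Matrix (Fin 2) (Fin 2) A) 1 0 ∈ I }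
  one_mem' := by
    simp only [Set.mem_setOf_eq, Matrix.SpecialLinearGroup.coe_one]
    rw [Matrix.one_apply_ne (by decide)]
    exact I.zero_mem
  mul_mem' := by
    intro a b ha hb
    simp only [Set.mem_setOf_eq, Matrix.SpecialLinearGroup.coe_mul] at *
    rw [Matrix.mul_apply, Fin.sum_univ_two]
    exact I.add_mem (I.mul_mem_right _ ha) (I.mul_mem_left _ hb)
  inv_mem' := by
    intro a ha
    simp only [Set.mem_setOf_eq] at *
    rw [Matrix.SpecialLinearGroup.coe_inv, Matrix.adjugate_fin_two]
    simpa using I.neg_mem ha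

private lemma conj_mul_aux {M : Type*} [Monoid M] (m mi x y : M) (h : mi * m = 1) :
    m * (x * y) * mi = (m * x * mi) * (m * y * mi) := by
  have : (m * x * mi) * (m * y * mi) = m * (x * (y * mi)) := by
    simp only [mul_assoc]
    rw [← mul_assoc mi m (y * mi), h, one_mul]
  rw [this]
  simp [mul_assoc]

/-- Conjugation by an invertible `2 × 2`-matrix, as an endomorphism of `SL₂(R)`. -/
def conjSL {R : Type*} [CommRing R] (M : GL (Fin 2) R) : SL2 R →* SL2 R where
  toFun X := ⟨(M : Matrix (Fin 2) (Fin 2) R) * (X : Matrix (Fin 2) (Fin 2) R) *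
      ((M⁻¹ : GL (Fin 2) R) : Matrix (Fin 2) (Fin 2) R), by
    rw [show ((M⁻¹ : GL (Fin 2) R) : Matrix (Fin 2) (Fin 2) R)
        = (↑M : Matrix (Fin 2) (Fin 2) R)⁻¹ from Matrix.coe_units_inv M,
      Matrix.det_conj M.isUnit, X.2]⟩
  map_one' := by
    apply Subtype.ext
    have h : (M : Matrix (Fin 2) (Fin 2) R) * ((M⁻¹ : GL (Fin 2) R) : Matrix (Fin 2) (Fin 2) R)
        = 1 := by
      rw [← Units.val_mul, mul_inv_cancel, Units.val_one]
    simp only [Matrix.SpecialLinearGroup.coe_one, mul_one, Matrix.SpecialLinearGroup.coe_mk]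
    exact h
  map_mul' X Y := by
    apply Subtype.ext
    have h : ((M⁻¹ : GL (Fin 2) R) : Matrix (Fin 2) (Fin 2) R) *
        (M : Matrix (Fin 2) (Fin 2) R) = 1 := by
      rw [← Units.val_mul, inv_mul_cancel, Units.val_one]
    simp only [Matrix.SpecialLinearGroup.coe_mul, Matrix.SpecialLinearGroup.coe_mk]
    exact conj_mul_aux _ _ _ _ h

/-- The diagonal matrix `diag(u, 1)` as an element of `GL₂(R)`. -/
def diagU {R : Type*} [CommRing R] (u : Rˣ) : GL (Fin 2) R where
  val := !![(u : R), 0; 0, 1]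
  inv := !![((u⁻¹ : Rˣ) : R), 0; 0, 1]
  val_inv := by
    ext i j
    fin_cases i <;> fin_cases j <;>
      simp [Matrix.mul_apply, Fin.sum_univ_two, Matrix.one_apply]
  inv_val := by
    ext i j
    fin_cases i <;> fin_cases j <;>
      simp [Matrix.mul_apply, Fin.sum_univ_two, Matrix.one_apply]

/-- The diagonal matrix `diag(a, a⁻¹)` as an element of `SL₂(R)`. -/
def diagSL {R : Type*} [CommRing R] (a : Rˣ) : SL2 R :=
  ⟨!![(a : R), 0; 0, ((a⁻¹ : Rˣ) : R)], by
    rw [Matrix.det_fin_two_of]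
    simp⟩

lemma mem_Gamma0 {A : Type*} [CommRing A] {I : Ideal A} {g : SL2 A} :
    g ∈ Gamma0 I ↔ (g : Matrix (Fin 2) (Fin 2) A) 1 0 ∈ I := Iff.rfl

lemma diagSL_comm {R : Type*} [CommRing R] (a b : Rˣ) :
    diagSL a * diagSL b = diagSL b * diagSL a := by
  apply Subtype.ext
  show ((diagSL a : SL2 R) : Matrix (Fin 2) (Fin 2) R) * (diagSL b : SL2 R)
      = ((diagSL b : SL2 R) : Matrix (Fin 2) (Fin 2) R) * (diagSL a : SL2 R)
  unfold diagSL
  ext i j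
  fin_cases i <;> fin_cases j <;>
    simp [Matrix.mul_apply, Fin.sum_univ_two] <;> ring

lemma diagSL_mem_Gamma0 {A : Type*} [CommRing A] (I : Ideal A) (a : Aˣ) :
    diagSL a ∈ Gamma0 I := by
  rw [mem_Gamma0]
  have h : ((diagSL a : SL2 A) : Matrix (Fin 2) (Fin 2) A) 1 0 = 0 := by
    unfold diagSL; simp
  rw [h]; exact I.zero_mem

/-- The antidiagonal matrix `g_π = (0 -1; w 0)` as an element of `GL₂(F)`,
for a unit `w`. -/
def gpiU {F : Type*} [CommRing F] (w : Fˣ) : GL (Fin 2) F where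
  val := !![0, -1; (w : F), 0]
  inv := !![0, ((w⁻¹ : Fˣ) : F); -1, 0]
  val_inv := by
    ext i j
    fin_cases i <;> fin_cases j <;>
      simp [Matrix.mul_apply, Fin.sum_univ_two, Matrix.one_apply]
  inv_val := by
    ext i j
    fin_cases i <;> fin_cases j <;>
      simp [Matrix.mul_apply, Fin.sum_univ_two, Matrix.one_apply]

set_option synthInstance.maxHeartbeats 1000000

lemma natCast_lt_enatCard {n : ℕ} {α : Type*} (h : n < Nat.card α ∨ Infinite α) :
    (n : ℕ∞) < ENat.card α := by
  rcases h with h | h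
  · have := Nat.finite_of_card_ne_zero (Nat.ne_zero_of_lt h)
    simpa [ENat.card_eq_coe_natCard] using h
  · simp

/-! ### Cochains on tuples in general position -/

section GeneralPosition

variable {X P V : Type*} {r : X → P}

/-- Three points of `X` in general position with respect to `r : X → P`: their values under `r`
are pairwise distinct. For the projective line over a local ring, `r` is the reduction to the
residue field. -/
structure GenTriple (r : X → P) (x y z : X) : Prop where
  ne₁₂ : r x ≠ r y
  ne₁₃ : r x ≠ r z
  ne₂₃ : r y ≠ r z

/-- The 2-cocycle condition for a function on triples in general position. -/
def IsTripleCocycle [AddCommGroup V] (r : X → P) (T : X → X → X → V) : Prop :=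
  ∀ ⦃x y z w⦄, GenTriple r x y z → r x ≠ r w → r y ≠ r w → r z ≠ r w →
    T y z w - T x z w + T x y w - T x y z = 0

lemma exists_apply_notMem_of_card_lt {s : Finset P} (h : s.card < (Set.range r).encard) :
    ∃ x, r x ∉ s := by
  by_contra! hs
  have hle := Set.encard_le_encard (Set.range_subset_iff.2 hs : Set.range r ⊆ s)
  exact h.not_ge (hle.trans_eq (Set.encard_coe_eq_coe_finsetCard s))

lemma exists_apply_ne₂ (h : 2 < (Set.range r).encard) (a b : P) : ∃ x, r x ≠ a ∧ r x ≠ b := by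
  classical
  obtain ⟨x, hx⟩ := exists_apply_notMem_of_card_lt (s := {a, b})
    (h.trans_le' (mod_cast Finset.card_le_two))
  exact ⟨x, by simpa using hx⟩

lemma exists_apply_ne₃ (h : 3 < (Set.range r).encard) (a b c : P) :
    ∃ x, r x ≠ a ∧ r x ≠ b ∧ r x ≠ c := by
  classical
  obtain ⟨x, hx⟩ := exists_apply_notMem_of_card_lt (s := {a, b, c})
    (h.trans_le' (mod_cast Finset.card_le_three))
  exact ⟨x, by simpa using hx⟩

lemma lt_encard_range_restrict_ne {n : ℕ} (h : n + 1 < (Set.range r).encard) (a : P) :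
    n < (Set.range fun x : {x // r x ≠ a} => r x).encard := by
  have hsub : Set.range r ⊆ insert a (Set.range fun x : {x // r x ≠ a} => r x) := by
    rintro _ ⟨x, rfl⟩
    by_cases hx : r x = a
    exacts [Or.inl hx, Or.inr ⟨⟨x, hx⟩, rfl⟩]
  exact lt_of_add_lt_add_right
    (h.trans_le ((Set.encard_le_encard hsub).trans (Set.encard_insert_le _ a)))

lemma eq_of_forall_ne (h : 2 < (Set.range r).encard) {η : X → V}
    (hη : ∀ x y, r x ≠ r y → η x = η y) (x y : X) : η x = η y := by
  obtain ⟨z, hzx, hzy⟩ := exists_apply_ne₂ h (r x) (r y)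
  rw [← hη z x hzx, hη z y hzy]

variable [AddCommGroup V]

lemma cone_eq_cone (h : 3 < (Set.range r).encard) {θ : X → X → V}
    (hθ : ∀ x y z, GenTriple r x y z → θ y z - θ x z + θ x y = 0) {p x q q' : X}
    (hpq : r p ≠ r q) (hqx : r q ≠ r x) (hpq' : r p ≠ r q') (hqx' : r q' ≠ r x) :
    θ p q + θ q x = θ p q' + θ q' x := by
  have generic : ∀ {q q'}, r p ≠ r q → r q ≠ r x → r p ≠ r q' → r q' ≠ r x → r q ≠ r q' →
      θ p q + θ q x = θ p q' + θ q' x := fun {q q'} hpq hqx hpq' hqx' hqq' => by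
    linear_combination (norm := abel)
      hθ p q q' ⟨hpq, hpq', hqq'⟩ - hθ q q' x ⟨hqq', hqx, hqx'⟩
  by_cases hqq' : r q = r q'
  · obtain ⟨s, hsp, hsx, hsq⟩ := exists_apply_ne₃ h (r p) (r x) (r q)
    rw [generic hpq hqx hsp.symm hsx hsq.symm,
      generic hpq' hqx' hsp.symm hsx (hqq' ▸ hsq.symm)]
  · exact generic hpq hqx hpq' hqx' hqq'

lemma exists_primitive_of_pair_cocycle (h : 3 < (Set.range r).encard) {θ : X → X → V}
    (hθ : ∀ x y z, GenTriple r x y z → θ y z - θ x z + θ x y = 0) :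
    ∃ η : X → V, ∀ x y, r x ≠ r y → θ x y = η y - η x := by
  rcases isEmpty_or_nonempty X with hX | ⟨⟨p⟩⟩
  · exact ⟨fun _ => 0, fun x => hX.elim x⟩
  have h2 : 2 < (Set.range r).encard := lt_trans (by norm_num) h
  choose q hqp hqx using fun x => exists_apply_ne₂ h2 (r p) (r x)
  refine ⟨fun x => θ p (q x) + θ (q x) x, fun x y hxy => ?_⟩
  obtain ⟨s, hsp, hsx, hsy⟩ := exists_apply_ne₃ h (r p) (r x) (r y)
  dsimp only
  rw [cone_eq_cone h hθ (hqp x).symm (hqx x) hsp.symm hsx,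
    cone_eq_cone h hθ (hqp y).symm (hqx y) hsp.symm hsy]
  linear_combination (norm := abel) hθ s x y ⟨hsx, hsy, hxy⟩

lemma exists_const_of_pair_invariance (h : 3 < (Set.range r).encard) {E : X → X → V}
    (hleft : ∀ x y z, GenTriple r x y z → E x z = E y z)
    (hright : ∀ x y z, GenTriple r x y z → E x y = E x z) :
    ∃ c, ∀ x y, r x ≠ r y → E x y = c := by
  rcases isEmpty_or_nonempty X with hX | ⟨⟨p⟩⟩
  · exact ⟨0, fun x => hX.elim x⟩
  have left : ∀ {x y z}, r x ≠ r z → r y ≠ r z → E x z = E y z := fun {x y z} hx hy => by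
    obtain ⟨s, hsx, hsy, hsz⟩ := exists_apply_ne₃ h (r x) (r y) (r z)
    rw [hleft x s z ⟨hsx.symm, hx, hsz⟩, hleft y s z ⟨hsy.symm, hy, hsz⟩]
  have right : ∀ {x y z}, r x ≠ r y → r x ≠ r z → E x y = E x z := fun {x y z} hy hz => by
    obtain ⟨s, hsx, hsy, hsz⟩ := exists_apply_ne₃ h (r x) (r y) (r z)
    rw [hright x y s ⟨hy, hsx.symm, hsy.symm⟩, hright x z s ⟨hz, hsx.symm, hsz.symm⟩]
  obtain ⟨q, hqp, -, -⟩ := exists_apply_ne₃ h (r p) (r p) (r p)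
  refine ⟨E p q, fun x y hxy => ?_⟩
  obtain ⟨s, hsx, hsp, -⟩ := exists_apply_ne₃ h (r x) (r p) (r p)
  rw [right hxy hsx.symm, left hsx.symm hsp.symm, right hsp.symm hqp.symm]

/-- The values on pairs containing `z`, a point with the same `r`-value as the vertex `p` of the
cone, of a primitive of `T` which is `T p x y` away from that value. -/
lemma exists_cone_extension (h : 4 < (Set.range r).encard) {T : X → X → X → V}
    (hT : IsTripleCocycle r T) {p z : X} (hz : r z = r p) :
    ∃ ψ ψ' : {x // r x ≠ r p} → V,
      (∀ y y' : {x // r x ≠ r p}, r y ≠ r y' → T p y y' - T z y y' = ψ y' - ψ y) ∧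
      (∀ y y' : {x // r x ≠ r p}, r y ≠ r y' → T p y y' - T y y' z = ψ' y - ψ' y') ∧
      (∀ y y' : {x // r x ≠ r p}, r y ≠ r y' → T y z y' + T p y y' = ψ y' + ψ' y) := by
  let s : {x // r x ≠ r p} → P := fun x => r x
  have hs : 3 < (Set.range s).encard := lt_encard_range_restrict_ne (n := 3) h (r p)
  have ne_z : ∀ y : {x // r x ≠ r p}, r y ≠ r z := fun y => hz.symm ▸ y.2
  have hTp : ∀ {a b c}, GenTriple s a b c → T a b c - T p b c + T p a c - T p a b = 0 :=
    fun {a b c} g => hT ⟨a.2.symm, b.2.symm, g.ne₁₂⟩ c.2.symm g.ne₁₃ g.ne₂₃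
  obtain ⟨ψ, hψ⟩ := exists_primitive_of_pair_cocycle hs
    (θ := fun y y' => T p y y' - T z y y') fun a b c g => by
      have hTz := hT ⟨(ne_z a).symm, (ne_z b).symm, g.ne₁₂⟩ (ne_z c).symm g.ne₁₃ g.ne₂₃
      linear_combination (norm := abel) hTz - hTp g
  obtain ⟨ψ', hψ'⟩ := exists_primitive_of_pair_cocycle hs
    (θ := fun y y' => T y y' z - T p y y') fun a b c g => by
      have hTz := hT ⟨g.ne₁₂, g.ne₁₃, g.ne₂₃⟩ (ne_z a) (ne_z b) (ne_z c)
      linear_combination (norm := abel) hTp g + hTz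
  obtain ⟨e, he⟩ := exists_const_of_pair_invariance hs
    (E := fun y y' => T y z y' + T p y y' - ψ y' - ψ' y)
    (fun a b c g => by
      have hTz := hT ⟨g.ne₁₂, ne_z a, ne_z b⟩ g.ne₁₃ g.ne₂₃ (ne_z c).symm
      linear_combination (norm := abel) hTp g - hTz - hψ' a b g.ne₁₂)
    (fun a b c g => by
      have hTz := hT ⟨ne_z a, g.ne₁₂, (ne_z b).symm⟩ g.ne₁₃ (ne_z c).symm g.ne₂₃
      linear_combination (norm := abel) -hTp g - hTz - hψ b c g.ne₂₃)
  refine ⟨ψ, fun y => ψ' y + e, hψ, fun y y' hyy' => ?_, fun y y' hyy' => ?_⟩ <;>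
    dsimp only
  · linear_combination (norm := abel) -hψ' y y' hyy'
  · linear_combination (norm := abel) he y y' hyy'

lemma exists_primitive_of_isTripleCocycle (h : 4 < (Set.range r).encard) {T : X → X → X → V}
    (hT : IsTripleCocycle r T) :
    ∃ φ : X → X → V, ∀ x y z, GenTriple r x y z → φ y z - φ x z + φ x y = T x y z := by
  classical
  rcases isEmpty_or_nonempty X with hX | ⟨⟨p⟩⟩
  · exact ⟨fun _ _ => 0, fun x => hX.elim x⟩
  choose ψ ψ' hleft hright hmid using fun z : {z // r z = r p} => exists_cone_extension h hT z.2
  refine ⟨fun x y =>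
    if hx : r x = r p then if hy : r y = r p then 0 else ψ ⟨x, hx⟩ ⟨y, hy⟩
    else if hy : r y = r p then ψ' ⟨y, hy⟩ ⟨x, hx⟩ else T p x y, fun x y z g => ?_⟩
  by_cases hx : r x = r p
  · have hy : r y ≠ r p := hx ▸ g.ne₁₂.symm
    have hz : r z ≠ r p := hx ▸ g.ne₁₃.symm
    simp only [hx, hy, hz, dite_true, dite_false]
    linear_combination (norm := abel) hleft ⟨x, hx⟩ ⟨y, hy⟩ ⟨z, hz⟩ g.ne₂₃
  by_cases hy : r y = r p
  · have hz : r z ≠ r p := hy ▸ g.ne₂₃.symm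
    simp only [hx, hy, hz, dite_true, dite_false]
    linear_combination (norm := abel) -hmid ⟨y, hy⟩ ⟨x, hx⟩ ⟨z, hz⟩ g.ne₁₃
  by_cases hz : r z = r p
  · simp only [hx, hy, hz, dite_true, dite_false]
    linear_combination (norm := abel) hright ⟨z, hz⟩ ⟨x, hx⟩ ⟨y, hy⟩ g.ne₁₂
  · simp only [hx, hy, hz, dite_false]
    linear_combination (norm := abel)
      -hT (w := z) ⟨Ne.symm hx, Ne.symm hy, g.ne₁₂⟩ (Ne.symm hz) g.ne₁₃ g.ne₂₃

end GeneralPosition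

/-! ### Transgression of invariant cocycles on triples -/

section Transgression

variable {G X P V W : Type*} [Group G] [MulAction G X] [MulAction G P]
  [AddCommGroup V] [AddCommGroup W] {r : X →[G] P} {T T' : X → X → X → V}

/-- The inhomogeneous 2-cocycles of a group with values in a trivial module. -/
def IsTwoCocycle (c : G → G → V) : Prop :=
  ∀ a b g, c b g - c (a * b) g + c a (b * g) - c a b = 0

/-- Two inhomogeneous 2-cochains are cohomologous if they differ by the coboundary of a
1-cochain. -/
def IsCohomologous (c c' : G → G → V) : Prop :=
  ∃ e : G → V, ∀ a b, c a b = c' a b + (e a + e b - e (a * b))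

/-- `η` exhibits the 2-cochain `c`, seen in the functions on the `G`-set `X`, as a coboundary. -/
def IsTrivialization (η : G → X → V) (c : G → G → V) : Prop :=
  ∀ a b x, c a b = η a (b • x) + η b x - η (a * b) x

/-- A transgression of the function `T` on triples in general position to a 2-cocycle of `G`:
`T` is the coboundary of `primitive`, the translates of `primitive` differ from it by the
coboundaries of the `potential`s, and `cocycle` measures the failure of `potential` to be a
1-cocycle of `G` in the functions on `X`. -/
structure Transgression (r : X →[G] P) (T : X → X → X → V) where
  primitive : X → X → V
  potential : G → X → V
  cocycle : G → G → V
  coboundary_eq : ∀ {x y z}, GenTriple r x y z →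
    primitive y z - primitive x z + primitive x y = T x y z
  smul_sub : ∀ γ {x y}, r x ≠ r y →
    primitive (γ • x) (γ • y) - primitive x y = potential γ y - potential γ x
  trivialization : IsTrivialization potential cocycle

lemma IsTrivialization.isTwoCocycle [Nonempty X] {η : G → X → V} {c : G → G → V}
    (h : IsTrivialization η c) : IsTwoCocycle c := fun a b g => by
  obtain ⟨x⟩ := ‹Nonempty X›
  rw [h b g x, h (a * b) g x, h a (b * g) x, h a b (g • x), smul_smul, mul_assoc]
  abel

lemma apply_smul_ne (γ : G) {x y : X} (h : r x ≠ r y) : r (γ • x) ≠ r (γ • y) := by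
  rwa [map_smul, map_smul, (MulAction.injective γ).ne_iff]

lemma GenTriple.smul (γ : G) {x y z : X} (h : GenTriple r x y z) :
    GenTriple r (γ • x) (γ • y) (γ • z) :=
  ⟨apply_smul_ne γ h.ne₁₂, apply_smul_ne γ h.ne₁₃, apply_smul_ne γ h.ne₂₃⟩

lemma exists_transgression (h : 4 < (Set.range r).encard) (o : X) (hT : IsTripleCocycle r T)
    (hinv : ∀ (γ : G) {x y z}, GenTriple r x y z → T (γ • x) (γ • y) (γ • z) = T x y z) :
    ∃ t : Transgression r T, ∀ γ, t.potential γ o = 0 := by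
  have h3 : 3 < (Set.range r).encard := lt_trans (by norm_num) h
  have h2 : 2 < (Set.range r).encard := lt_trans (by norm_num) h3
  obtain ⟨φ, hφ⟩ := exists_primitive_of_isTripleCocycle h hT
  have hpot : ∀ γ : G, ∃ η : X → V, ∀ x y, r x ≠ r y →
      φ (γ • x) (γ • y) - φ x y = η y - η x := fun γ =>
    exists_primitive_of_pair_cocycle h3 (θ := fun x y => φ (γ • x) (γ • y) - φ x y)
      fun x y z g => by
        linear_combination (norm := abel) hφ _ _ _ (g.smul γ) - hφ x y z g + hinv γ g
  choose η hη using hpot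
  refine ⟨⟨φ, fun γ x => η γ x - η γ o, fun γ δ => η γ (δ • o) - η γ o, fun g => hφ _ _ _ g,
    fun γ x y hxy => by rw [hη γ x y hxy]; abel, fun γ δ x => ?_⟩, fun γ => sub_self _⟩
  have hconst := eq_of_forall_ne h2 (η := fun x => η γ (δ • x) + η δ x - η (γ * δ) x)
    (fun x y hxy => by
      have hγδ := hη (γ * δ) x y hxy
      rw [mul_smul, mul_smul] at hγδ
      linear_combination (norm := abel) hη γ _ _ (apply_smul_ne δ hxy) + hη δ x y hxy - hγδ) x o
  dsimp only
  linear_combination (norm := abel) -hconst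

namespace Transgression

/-- The image of a transgression under a homomorphism of coefficients. -/
def map (t : Transgression r T) (f : V →+ W) :
    Transgression r fun x y z => f (T x y z) where
  primitive x y := f (t.primitive x y)
  potential γ x := f (t.potential γ x)
  cocycle γ δ := f (t.cocycle γ δ)
  coboundary_eq g := by simp only [← map_sub, ← map_add, t.coboundary_eq g]
  smul_sub γ _ _ h := by simp only [← map_sub, t.smul_sub γ h]
  trivialization γ δ x := by simp only [← map_sub, ← map_add, t.trivialization γ δ x]

/-- The difference of two primitives of the same function is itself a coboundary `∂ν`. -/
lemma isCohomologous [Nonempty X] (h : 3 < (Set.range r).encard) (t : Transgression r T)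
    (t' : Transgression r T') (hT : ∀ {x y z}, GenTriple r x y z → T x y z = T' x y z) :
    IsCohomologous t.cocycle t'.cocycle := by
  have h2 : 2 < (Set.range r).encard := lt_trans (by norm_num) h
  obtain ⟨o⟩ := ‹Nonempty X›
  obtain ⟨ν, hν⟩ := exists_primitive_of_pair_cocycle h
    (θ := fun x y => t.primitive x y - t'.primitive x y) fun x y z g => by
      linear_combination (norm := abel) t.coboundary_eq g - t'.coboundary_eq g + hT g
  let e : G → X → V := fun γ x => t.potential γ x - t'.potential γ x - ν (γ • x) + ν x
  have he : ∀ γ x, e γ x = e γ o := fun γ x => eq_of_forall_ne h2 (fun x y hxy => by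
    linear_combination (norm := (dsimp only [e]; abel)) t.smul_sub γ hxy - t'.smul_sub γ hxy +
      hν x y hxy - hν _ _ (apply_smul_ne γ hxy)) x o
  refine ⟨fun γ => e γ o, fun γ δ => ?_⟩
  rw [t.trivialization γ δ o, t'.trivialization γ δ o]
  linear_combination (norm := (dsimp only [e]; rw [mul_smul]; abel)) he γ (δ • o)

end Transgression

end Transgression

/-! ### Characters with values in `ℚ / ℤ` -/

section Characters

/-- The divisible group `ℚ / ℤ`, an injective cogenerator of abelian groups. -/
abbrev QModZ : Type := AddCircle (1 : ℚ)

lemma exists_extend_character {M N : Type*} [AddCommGroup M] [AddCommGroup N] (p : M →+ N)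
    (f : M →+ QModZ) (h : p.ker ≤ f.ker) : ∃ g : N →+ QModZ, g.comp p = f := by
  obtain ⟨g, hg⟩ := CharacterModule.dual_surjective_of_injective (R := ℤ)
    (QuotientAddGroup.kerLift p).toIntLinearMap (QuotientAddGroup.kerLift_injective p)
    (QuotientAddGroup.lift p.ker f h)
  exact ⟨g, AddMonoidHom.ext fun m => DFunLike.congr_fun hg (QuotientAddGroup.mk m)⟩

lemma exists_extend_mulCharacter {M N : Type*} [CommGroup M] [CommGroup N] (p : M →* N)
    (f : M →* Multiplicative QModZ) (h : p.ker ≤ f.ker) :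
    ∃ g : N →* Multiplicative QModZ, g.comp p = f := by
  obtain ⟨g, hg⟩ := exists_extend_character (MonoidHom.toAdditive p)
    (MonoidHom.toAdditiveLeft f) fun m hm => h hm
  exact ⟨AddMonoidHom.toMultiplicativeRight g, MonoidHom.ext fun m => DFunLike.congr_fun hg m⟩

lemma mem_of_forall_character {M : Type*} [AddCommGroup M] {S : AddSubgroup M} {x : M}
    (h : ∀ f : M →+ QModZ, S ≤ f.ker → f x = 0) : x ∈ S := by
  rw [← QuotientAddGroup.eq_zero_iff]
  refine CharacterModule.eq_zero_of_character_apply (A := M ⧸ S) fun f => ?_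
  let f' : M ⧸ S →+ QModZ := f
  exact h (f'.comp (QuotientAddGroup.mk' S)) fun s hs => by
    rw [AddMonoidHom.mem_ker, AddMonoidHom.comp_apply, QuotientAddGroup.mk'_apply,
      (QuotientAddGroup.eq_zero_iff s).2 hs, map_zero]

end Characters

/-! ### Evaluation of 2-cocycles on the bar complex -/

section BarComplex

open GroupHomology

variable {G V W : Type*} [AddCommGroup V] [AddCommGroup W]

lemma vec_two_eta {α : Type*} (g : Fin 2 → α) : ![g 0, g 1] = g := by
  ext i; fin_cases i <;> rfl

lemma vec_three_eta {α : Type*} (g : Fin 3 → α) : ![g 0, g 1, g 2] = g := by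
  ext i; fin_cases i <;> rfl

lemma two_chain_hom_ext {f f' : Ch ℤ G 2 →ₗ[ℤ] V}
    (h : ∀ a b, f (Finsupp.single ![a, b] 1) = f' (Finsupp.single ![a, b] 1)) : f = f' :=
  Finsupp.lhom_ext' fun g => LinearMap.ext_ring (vec_two_eta g ▸ h (g 0) (g 1))

lemma three_chain_hom_ext {f f' : Ch ℤ G 3 →ₗ[ℤ] V}
    (h : ∀ a b g, f (Finsupp.single ![a, b, g] 1) = f' (Finsupp.single ![a, b, g] 1)) : f = f' :=
  Finsupp.lhom_ext' fun g => LinearMap.ext_ring (vec_three_eta g ▸ h (g 0) (g 1) (g 2))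

/-- The evaluation of an inhomogeneous 2-cochain on 2-chains. -/
def evalChain (c : G → G → V) : Ch ℤ G 2 →ₗ[ℤ] V :=
  Finsupp.linearCombination ℤ fun g => c (g 0) (g 1)

@[simp]
lemma evalChain_single (c : G → G → V) (a b : G) :
    evalChain c (Finsupp.single ![a, b] 1) = c a b := by
  simp [evalChain]

variable [Group G]

lemma dd_single_pair (a b : G) : dd ℤ G 1 (Finsupp.single ![a, b] 1) =
    Finsupp.single ![b] 1 - Finsupp.single ![a * b] 1 + Finsupp.single ![a] 1 := by
  have h0 : face 0 ![a, b] = ![b] := by ext m; fin_cases m; simp [face]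
  have h1 : face 1 ![a, b] = ![a * b] := by ext m; fin_cases m; simp [face]
  have h2 : face 2 ![a, b] = ![a] := by ext m; fin_cases m; simp [face]
  rw [dd_single, dfun]
  simp only [Finset.sum_range_succ, Finset.sum_range_zero, h0, h1, h2]
  module

lemma dd_single_triple (a b g : G) : dd ℤ G 2 (Finsupp.single ![a, b, g] 1) =
    Finsupp.single ![b, g] 1 - Finsupp.single ![a * b, g] 1 + Finsupp.single ![a, b * g] 1
      - Finsupp.single ![a, b] 1 := by
  have h0 : face 0 ![a, b, g] = ![b, g] := by ext m; fin_cases m <;> simp [face]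
  have h1 : face 1 ![a, b, g] = ![a * b, g] := by ext m; fin_cases m <;> simp [face]
  have h2 : face 2 ![a, b, g] = ![a, b * g] := by ext m; fin_cases m <;> simp [face]
  have h3 : face 3 ![a, b, g] = ![a, b] := by ext m; fin_cases m <;> simp [face]
  rw [dd_single, dfun]
  simp only [Finset.sum_range_succ, Finset.sum_range_zero, h0, h1, h2, h3]
  module

lemma dd_comp_dd : dd ℤ G 1 ∘ₗ dd ℤ G 2 = 0 := by
  have key : ∀ a b g : G, dd ℤ G 1 (dd ℤ G 2 (Finsupp.single ![a, b, g] 1)) = 0 :=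
    fun a b g => by
      simp only [dd_single_triple, map_sub, map_add, dd_single_pair, mul_assoc]
      abel
  exact three_chain_hom_ext key

lemma isTwoCocycle_iff {c : G → G → V} : IsTwoCocycle c ↔ evalChain c ∘ₗ dd ℤ G 2 = 0 := by
  have key : ∀ a b g, (evalChain c ∘ₗ dd ℤ G 2) (Finsupp.single ![a, b, g] 1) =
      c b g - c (a * b) g + c a (b * g) - c a b := fun a b g => by
    simp [dd_single_triple]
  refine ⟨fun hc => three_chain_hom_ext fun a b g => ?_, fun h a b g => ?_⟩
  · rw [key, hc, LinearMap.zero_apply]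
  · rw [← key, h, LinearMap.zero_apply]

lemma IsTwoCocycle.map {c : G → G → V} (hc : IsTwoCocycle c) (f : V →+ W) :
    IsTwoCocycle fun a b => f (c a b) := fun a b g => by
  simp only [← map_sub, ← map_add, hc a b g, map_zero]

/-- The evaluation of a 2-cocycle on the second homology group. -/
def evalHomology {c : G → G → V} (hc : IsTwoCocycle c) : H ℤ G 2 →+ V :=
  (Submodule.liftQ _ (evalChain c) (LinearMap.range_le_ker_iff.2 (isTwoCocycle_iff.1 hc)) ∘ₗ
    (Hsub ℤ G 2).subtype).toAddMonoidHom

lemma exists_hcl_eq (x : H ℤ G 2) : ∃ z, ∃ hz : z ∈ cycles ℤ G 2, hcl ℤ G z hz = x := by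
  obtain ⟨_, z, hz, rfl⟩ := x
  exact ⟨z, hz, rfl⟩

lemma evalHomology_hcl {c : G → G → V} (hc : IsTwoCocycle c) {z : Ch ℤ G 2}
    (hz : z ∈ cycles ℤ G 2) : evalHomology hc (hcl ℤ G z hz) = evalChain c z := rfl

lemma evalHomology_map {c : G → G → V} (hc : IsTwoCocycle c) (f : V →+ W) (x : H ℤ G 2) :
    evalHomology (hc.map f) x = f (evalHomology hc x) := by
  obtain ⟨z, hz, rfl⟩ := exists_hcl_eq x
  have h : evalChain (fun a b => f (c a b)) = f.toIntLinearMap ∘ₗ evalChain c :=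
    two_chain_hom_ext fun a b => by simp
  exact DFunLike.congr_fun h z

lemma IsCohomologous.evalHomology_eq {c c' : G → G → V} (h : IsCohomologous c c')
    (hc : IsTwoCocycle c) (hc' : IsTwoCocycle c') : evalHomology hc = evalHomology hc' := by
  ext x
  obtain ⟨z, hz, rfl⟩ := exists_hcl_eq x
  obtain ⟨e, he⟩ := h
  have key : evalChain c = evalChain c' +
      Finsupp.linearCombination ℤ (fun g : Fin 1 → G => e (g 0)) ∘ₗ dd ℤ G 1 :=
    two_chain_hom_ext fun a b => by
      simp [dd_single_pair, he]
      abel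
  rw [evalHomology_hcl, evalHomology_hcl, key, LinearMap.add_apply, LinearMap.comp_apply,
    show dd ℤ G 1 z = 0 from hz, map_zero, add_zero]

lemma IsCohomologous.evalHomology_eq_zero {c : G → G → V} (h : IsCohomologous c 0)
    (hc : IsTwoCocycle c) : evalHomology hc = 0 := by
  have h₀ : IsTwoCocycle (0 : G → G → V) := fun _ _ _ => by simp
  rw [h.evalHomology_eq hc h₀]
  exact AddMonoidHom.ext fun x => by simpa using evalHomology_map h₀ (0 : V →+ V) x

lemma isCohomologous_zero_of_evalHomology_eq_zero {c : G → G → QModZ} (hc : IsTwoCocycle c)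
    (h : evalHomology hc = 0) : IsCohomologous c 0 := by
  obtain ⟨f, hf⟩ := exists_extend_character (dd ℤ G 1).toAddMonoidHom (evalChain c).toAddMonoidHom
    fun z hz => DFunLike.congr_fun h (hcl ℤ G z hz)
  refine ⟨fun a => f (Finsupp.single ![a] 1), fun a b => ?_⟩
  have hab : f (dd ℤ G 1 (Finsupp.single ![a, b] 1)) = c a b :=
    (DFunLike.congr_fun hf _).trans (evalChain_single c a b)
  rw [← hab, dd_single_pair, map_add, map_sub, Pi.zero_apply, Pi.zero_apply]
  abel

variable {B : Subgroup G}

lemma evalHomology_Hmap_subtype {c : G → G → V} (hc : IsTwoCocycle c)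
    (hB : ∀ a ∈ B, ∀ b ∈ B, c a b = 0) (x : H ℤ B 2) :
    evalHomology hc (Hmap ℤ B.subtype 2 x) = 0 := by
  obtain ⟨z, hz, rfl⟩ := exists_hcl_eq x
  have h : evalChain c ∘ₗ chmap ℤ B.subtype 2 = 0 := Finsupp.lhom_ext' fun g =>
    LinearMap.ext_ring <| by
      simpa [chmap_single, evalChain] using hB _ (g 0).2 _ (g 1).2
  exact DFunLike.congr_fun h z

lemma chmap_subtype_injective (B : Subgroup G) (n : ℕ) :
    Function.Injective (chmap ℤ B.subtype n) :=
  Finsupp.mapDomain_injective fun _ _ h => funext fun i => Subtype.ext (congrFun h i)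

lemma hcl_mem_range_Hmap_subtype {z : Ch ℤ G 2} (hz : z ∈ cycles ℤ G 2)
    (h : z ∈ LinearMap.range (dd ℤ G 2) ⊔ LinearMap.range (chmap ℤ B.subtype 2)) :
    hcl ℤ G z hz ∈ Set.range (Hmap ℤ B.subtype 2) := by
  obtain ⟨_, ⟨y, rfl⟩, _, ⟨z', rfl⟩, hyz⟩ := Submodule.mem_sup.1 h
  have hz' : z' ∈ cycles ℤ B 2 := LinearMap.mem_ker.2 <| chmap_subtype_injective B 1 <| by
    have hdz : dd ℤ G 1 z = 0 := hz
    rwa [← hyz, map_add, ← LinearMap.comp_apply, dd_comp_dd, LinearMap.zero_apply, zero_add,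
      chmap_comm_apply, ← map_zero (chmap ℤ B.subtype 1)] at hdz
  refine ⟨hcl ℤ B z' hz', Subtype.ext ((Submodule.Quotient.eq _).2 ⟨-y, ?_⟩)⟩
  rw [map_neg, ← hyz]
  abel

lemma mem_range_Hmap_subtype {x : H ℤ G 2}
    (h : ∀ (c : G → G → QModZ) (hc : IsTwoCocycle c), (∀ a ∈ B, ∀ b ∈ B, c a b = 0) →
      evalHomology hc x = 0) :
    x ∈ Set.range (Hmap ℤ B.subtype 2) := by
  obtain ⟨z, hz, rfl⟩ := exists_hcl_eq x
  refine hcl_mem_range_Hmap_subtype hz ((Submodule.mem_toAddSubgroup _).1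
    (mem_of_forall_character fun f hf => ?_))
  let c : G → G → QModZ := fun a b => f (Finsupp.single ![a, b] 1)
  have hfc : f.toIntLinearMap = evalChain c := two_chain_hom_ext fun a b => by simp [c]
  have hc : IsTwoCocycle c := isTwoCocycle_iff.2 <| hfc ▸ LinearMap.ext fun y =>
    hf (Submodule.mem_sup_left ⟨y, rfl⟩)
  have hcB : ∀ a ∈ B, ∀ b ∈ B, c a b = 0 := fun a ha b hb => hf <| Submodule.mem_sup_right
    ⟨Finsupp.single ![⟨a, ha⟩, ⟨b, hb⟩] 1, by
      rw [chmap_single]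
      congr 1
      ext i
      fin_cases i <;> rfl⟩
  have := h c hc hcB
  rwa [evalHomology_hcl, ← hfc] at this

end BarComplex

/-! ### Cocycles and homogeneous spaces -/

section HomogeneousSpace

variable {G N V : Type*} [Group G] [CommGroup N] [AddCommGroup V] {B : Subgroup G}

/-- The cocycle of the `G`-space `G ⧸ B` with values in `B` which is attached to the
representatives `Quotient.out`. -/
def cosetCocycle (γ : G) (x : G ⧸ B) : B :=
  ⟨(γ • x).out⁻¹ * (γ * x.out), by
    rw [← QuotientGroup.eq, QuotientGroup.out_eq', ← smul_eq_mul, ← MulAction.Quotient.smul_mk,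
      QuotientGroup.out_eq']⟩

lemma out_mul_cosetCocycle (γ : G) (x : G ⧸ B) :
    (γ • x).out * (cosetCocycle γ x : G) = γ * x.out :=
  mul_inv_cancel_left _ _

lemma cosetCocycle_mul (γ δ : G) (x : G ⧸ B) :
    cosetCocycle (γ * δ) x = cosetCocycle γ (δ • x) * cosetCocycle δ x := by
  ext
  simp only [cosetCocycle, mul_smul, Subgroup.coe_mul]
  group

lemma map_cosetCocycle_mk (f : B →* N) {γ g : G} {b : B} (h : γ * g = g * b) :
    f (cosetCocycle γ (g : G ⧸ B)) = f b := by
  obtain ⟨b₀, hb₀⟩ := QuotientGroup.mk_out_eq_mul B g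
  have hfix : γ • (g : G ⧸ B) = g := by
    rw [MulAction.Quotient.smul_mk, smul_eq_mul, h, QuotientGroup.mk_mul_of_mem g b.2]
  have hconj : cosetCocycle γ (g : G ⧸ B) = b₀⁻¹ * b * b₀ := by
    ext
    simp only [cosetCocycle, hfix, hb₀, Subgroup.coe_mul, Subgroup.coe_inv, ← mul_assoc γ, h]
    group
  rw [hconj, map_mul, map_mul, map_inv, mul_right_comm, inv_mul_cancel, one_mul]

lemma exists_isTrivialization {c : G → G → V} (hc : IsTwoCocycle c)
    (hB : ∀ a ∈ B, ∀ b ∈ B, c a b = 0) : ∃ η : G → G ⧸ B → V, IsTrivialization η c := by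
  refine ⟨fun γ x => c γ x.out - c (γ • x).out (cosetCocycle γ x), fun γ δ x => ?_⟩
  have h₁ := hc γ δ x.out
  have h₂ := hc γ (δ • x).out (cosetCocycle δ x)
  have h₃ := hc (γ • δ • x).out (cosetCocycle γ (δ • x)) (cosetCocycle δ x)
  rw [← out_mul_cosetCocycle δ x] at h₁
  rw [← out_mul_cosetCocycle γ (δ • x)] at h₂
  rw [hB _ (cosetCocycle γ (δ • x)).2 _ (cosetCocycle δ x).2] at h₃
  simp only [cosetCocycle_mul, mul_smul, Subgroup.coe_mul]
  linear_combination (norm := abel) -h₁ + h₂ - h₃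

/-- Shapiro's lemma in degree one: up to a coboundary, a 1-cocycle with values in the functions
on `G ⧸ B` is determined by its restriction to `B` at the base point. -/
lemma IsTrivialization.exists_eq_sub_add {η : G → G ⧸ B → V} (h : IsTrivialization η 0) :
    ∃ ν : G ⧸ B → V, ∀ γ x, η γ x = ν (γ • x) - ν x + η (cosetCocycle γ x) (1 : G) := by
  have hfix : ∀ b : B, (b : G) • ((1 : G) : G ⧸ B) = (1 : G) := fun b => by
    rw [MulAction.Quotient.smul_mk, smul_eq_mul, mul_one, QuotientGroup.eq, mul_one]
    exact B.inv_mem b.2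
  refine ⟨fun x => η x.out (1 : G), fun γ x => ?_⟩
  have hx : x.out • ((1 : G) : G ⧸ B) = x := by
    rw [MulAction.Quotient.smul_mk, smul_eq_mul, mul_one, QuotientGroup.out_eq']
  have h₁ := h γ x.out (1 : G)
  have h₂ := h (γ • x).out (cosetCocycle γ x) (1 : G)
  rw [hx] at h₁
  rw [hfix, out_mul_cosetCocycle] at h₂
  simp only [Pi.zero_apply] at h₁ h₂
  dsimp only
  linear_combination (norm := abel) h₂ - h₁

end HomogeneousSpace

section PairStabilizer

variable {G X P V : Type*} [Group G] [MulAction G X] [MulAction G P] [AddCommGroup V]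
  {r : X →[G] P} {η : G → X → V} {c : G → G → V}

lemma IsTrivialization.sub_mul (h : IsTrivialization η c) (γ δ : G) (x y : X) :
    η (γ * δ) y - η (γ * δ) x = η γ (δ • y) - η γ (δ • x) + (η δ y - η δ x) := by
  linear_combination (norm := abel) h γ δ y - h γ δ x

/-- The pointwise stabilizer of a pair of points. -/
abbrev pairStabilizer (G : Type*) {X : Type*} [Group G] [MulAction G X] (x y : X) : Subgroup G :=
  MulAction.stabilizer G x ⊓ MulAction.stabilizer G y

/-- The character `t ↦ η t y - η t x` of the stabilizer of `(x, y)` attached to a trivialization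
`η`. -/
def IsTrivialization.pairChar (h : IsTrivialization η c) (x y : X) :
    pairStabilizer G x y →* Multiplicative V :=
  MonoidHom.mk' (fun t => .ofAdd (η t y - η t x)) fun s t => by
    rw [← ofAdd_add, Subgroup.coe_mul, h.sub_mul, t.2.1, t.2.2]

lemma IsTrivialization.sub_conj (h : IsTrivialization η c) {γ s t : G} (hst : γ * t = s * γ)
    {x y : X} (ht : t ∈ pairStabilizer G x y) :
    η s (γ • y) - η s (γ • x) = η t y - η t x := by
  have h₁ := h.sub_mul γ t x y
  have h₂ := h.sub_mul s γ x y
  rw [hst, ht.1, ht.2] at h₁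
  linear_combination (norm := abel) h₁ - h₂

/-- Translating a base pair around yields a primitive of `η`, because `η` has no difference on its
stabilizer. -/
lemma IsTrivialization.exists_primitive (h : IsTrivialization η c) {o o' : X}
    (htrans : ∀ {x y}, r x ≠ r y → ∃ γ : G, γ • o = x ∧ γ • o' = y) (h₁ : h.pairChar o o' = 1) :
    ∃ β : X → X → V, ∀ γ {x y}, r x ≠ r y →
      β (γ • x) (γ • y) - β x y = η γ y - η γ x := by
  classical
  have hwd : ∀ {γ γ' : G}, γ • o = γ' • o → γ • o' = γ' • o' → η γ o' - η γ o = η γ' o' - η γ' o :=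
    fun {γ γ'} ho ho' => by
      have hmem : γ⁻¹ * γ' ∈ pairStabilizer G o o' :=
        ⟨show (γ⁻¹ * γ') • o = o by rw [mul_smul, ← ho, inv_smul_smul],
          show (γ⁻¹ * γ') • o' = o' by rw [mul_smul, ← ho', inv_smul_smul]⟩
      have hzero : η (γ⁻¹ * γ') o' - η (γ⁻¹ * γ') o = 0 :=
        Multiplicative.ofAdd.injective (DFunLike.congr_fun h₁ ⟨_, hmem⟩)
      have hmul := h.sub_mul γ (γ⁻¹ * γ') o o'
      rwa [hmem.1, hmem.2, hzero, add_zero, mul_inv_cancel_left, eq_comm] at hmul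
  let β : X → X → V := fun x y =>
    if hxy : ∃ γ : G, γ • o = x ∧ γ • o' = y then η hxy.choose o' - η hxy.choose o else 0
  have hβ : ∀ γ : G, β (γ • o) (γ • o') = η γ o' - η γ o := fun γ => by
    have hγ : ∃ γ' : G, γ' • o = γ • o ∧ γ' • o' = γ • o' := ⟨γ, rfl, rfl⟩
    exact (dif_pos hγ).trans (hwd hγ.choose_spec.1 hγ.choose_spec.2)
  refine ⟨β, fun γ x y hxy => ?_⟩
  obtain ⟨δ, rfl, rfl⟩ := htrans hxy
  rw [← mul_smul, ← mul_smul, hβ, hβ, h.sub_mul]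
  abel

end PairStabilizer

section Coboundary

variable {G X P V : Type*} [Group G] [MulAction G X] [MulAction G P] [AddCommGroup V]
  {r : X →[G] P} {T : X → X → X → V}

lemma Transgression.isTripleCocycle (t : Transgression r T) : IsTripleCocycle r T :=
  fun x y z w g hx hy hz => by
    rw [← t.coboundary_eq g, ← t.coboundary_eq ⟨g.ne₁₂, hx, hy⟩,
      ← t.coboundary_eq ⟨g.ne₁₃, hx, hz⟩, ← t.coboundary_eq ⟨g.ne₂₃, hy, hz⟩]
    abel

lemma Transgression.apply_smul (t : Transgression r T) (γ : G) {x y z : X}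
    (g : GenTriple r x y z) : T (γ • x) (γ • y) (γ • z) = T x y z := by
  rw [← t.coboundary_eq g, ← t.coboundary_eq (g.smul γ)]
  linear_combination (norm := abel)
    t.smul_sub γ g.ne₂₃ - t.smul_sub γ g.ne₁₃ + t.smul_sub γ g.ne₁₂

end Coboundary

/-! ### Characters of congruence subgroups of `SL₂` -/

section SpecialLinear

variable {A : Type*} [CommRing A]

open Matrix Matrix.SpecialLinearGroup

/-- The elementary matrix `(1 t; 0 1)`. -/
abbrev upper (t : A) : SL2 A := transvection zero_ne_one t

/-- The elementary matrix `(1 0; t 1)`. -/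
abbrev lower (t : A) : SL2 A := transvection one_ne_zero t

/-- The Weyl element `(0 -1; 1 0)`. -/
def weyl : SL2 A := ⟨!![0, -1; 1, 0], by simp⟩

lemma upper_coe (t : A) : (upper t : Matrix (Fin 2) (Fin 2) A) = !![1, t; 0, 1] := by
  ext i j; fin_cases i <;> fin_cases j <;> simp [transvection_coe]

lemma lower_coe (t : A) : (lower t : Matrix (Fin 2) (Fin 2) A) = !![1, 0; t, 1] := by
  ext i j; fin_cases i <;> fin_cases j <;> simp [transvection_coe]

lemma weyl_coe : ((weyl : SL2 A) : Matrix (Fin 2) (Fin 2) A) = !![0, -1; 1, 0] := rfl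

lemma diagSL_coe (a : Aˣ) :
    (diagSL a : Matrix (Fin 2) (Fin 2) A) = !![(a : A), 0; 0, ((a⁻¹ : Aˣ) : A)] := rfl

lemma sl_ext {g h : SL2 A} (h₀₀ : g 0 0 = h 0 0) (h₀₁ : g 0 1 = h 0 1) (h₁₀ : g 1 0 = h 1 0)
    (h₁₁ : g 1 1 = h 1 1) : g = h := by
  ext i j; fin_cases i <;> fin_cases j <;> assumption

lemma sl_mul_apply (g h : SL2 A) (i j : Fin 2) : (g * h) i j = g i 0 * h 0 j + g i 1 * h 1 j := by
  simp [Matrix.mul_apply]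

lemma sl_det (g : SL2 A) : g 0 0 * g 1 1 - g 0 1 * g 1 0 = 1 := by
  rw [← det_fin_two, det_coe]

lemma upper_mul_diagSL (u : Aˣ) (t : A) :
    upper ((u ^ 2 - 1) * t) * upper t * diagSL u = diagSL u * upper t := by
  rw [← transvection_add]
  apply sl_ext <;> simp [Matrix.mul_apply, upper_coe, diagSL_coe]
  linear_combination (u * t) * u.mul_inv

lemma lower_mul_diagSL_inv (u : Aˣ) (t : A) :
    lower ((u ^ 2 - 1) * t) * lower t * diagSL u⁻¹ = diagSL u⁻¹ * lower t := by
  rw [← transvection_add]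
  apply sl_ext <;> simp [Matrix.mul_apply, lower_coe, diagSL_coe]
  linear_combination (u * t) * u.mul_inv

lemma eq_lower_mul_diagSL_mul_upper (g : SL2 A) (a : Aˣ) (h : g 0 0 = a) :
    g = lower (g 1 0 * (a⁻¹ : Aˣ)) * diagSL a * upper ((a⁻¹ : Aˣ) * g 0 1) := by
  have hdet := sl_det g
  rw [h] at hdet
  apply sl_ext <;> simp [Matrix.mul_apply, upper_coe, lower_coe, diagSL_coe, h]
  linear_combination ((a⁻¹ : Aˣ) : A) * hdet - g 1 1 * a.mul_inv

variable {N : Type*} [CommGroup N]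

lemma map_eq_one_of_mul_mul_eq {H : Subgroup (SL2 A)} (f : H →* N) {x y d : H}
    (h : (x * y * d : SL2 A) = d * y) : f x = 1 := by
  have := congrArg f (Subtype.ext h : x * y * d = d * y)
  rwa [map_mul, map_mul, map_mul, mul_comm (f d), mul_assoc, mul_eq_right] at this

section TriangularFactorization

variable {H : Subgroup (SL2 A)} {J K : Ideal A} (hH : ∀ {g}, g ∈ H ↔ g 0 1 ∈ J ∧ g 1 0 ∈ K)
  (f : H →* N) {u : Aˣ} (hu : IsUnit ((u : A) ^ 2 - 1))
include hH

lemma upper_mem {t : A} (ht : t ∈ J) : upper t ∈ H := by simpa [hH, upper_coe] using ht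

lemma lower_mem {t : A} (ht : t ∈ K) : lower t ∈ H := by simpa [hH, lower_coe] using ht

lemma diagSL_mem (a : Aˣ) : diagSL a ∈ H := by simp [hH, diagSL_coe]

include hu

lemma map_upper_eq_one {t : A} (ht : t ∈ J) : f ⟨upper t, upper_mem hH ht⟩ = 1 := by
  obtain ⟨v, hv⟩ := hu
  refine map_eq_one_of_mul_mul_eq f (y := ⟨_, upper_mem hH (J.mul_mem_left ↑v⁻¹ ht)⟩)
    (d := ⟨_, diagSL_mem hH u⟩) ?_
  rw [← upper_mul_diagSL, ← hv, Units.mul_inv_cancel_left]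

lemma map_lower_eq_one {t : A} (ht : t ∈ K) : f ⟨lower t, lower_mem hH ht⟩ = 1 := by
  obtain ⟨v, hv⟩ := hu
  refine map_eq_one_of_mul_mul_eq f (y := ⟨_, lower_mem hH (K.mul_mem_left ↑v⁻¹ ht)⟩)
    (d := ⟨_, diagSL_mem hH u⁻¹⟩) ?_
  rw [← lower_mul_diagSL_inv, ← hv, Units.mul_inv_cancel_left]

lemma map_eq_map_diagSL {g : H} {a : Aˣ} (h : g.1 0 0 = a) :
    f g = f ⟨diagSL a, diagSL_mem hH a⟩ := by
  have hl := K.mul_mem_right ((a⁻¹ : Aˣ) : A) (hH.1 g.2).2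
  have hr := J.mul_mem_left ((a⁻¹ : Aˣ) : A) (hH.1 g.2).1
  have hg : g = ⟨_, lower_mem hH hl⟩ * ⟨_, diagSL_mem hH a⟩ * ⟨_, upper_mem hH hr⟩ :=
    Subtype.ext (eq_lower_mul_diagSL_mul_upper g.1 a h)
  rw [hg, map_mul, map_mul, map_lower_eq_one hH f hu hl, map_upper_eq_one hH f hu hr, one_mul,
    mul_one]

end TriangularFactorization

/-- The character `(a b; c d) ↦ a` of `Γ₀(I)` with values in the units of `A ⧸ I`. -/
def diagChar (I : Ideal A) : Gamma0 I →* (A ⧸ I)ˣ :=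
  MonoidHom.toHomUnits
    { toFun := fun g => Ideal.Quotient.mk I (g.1 0 0)
      map_one' := by simp
      map_mul' := fun g h => by
        have hc : Ideal.Quotient.mk I (h.1 1 0) = 0 := Ideal.Quotient.eq_zero_iff_mem.2 h.2
        simp [Matrix.mul_apply, hc] }

lemma diagChar_coe {I : Ideal A} (g : Gamma0 I) :
    (diagChar I g : A ⧸ I) = Ideal.Quotient.mk I (g.1 0 0) := rfl

lemma mem_Gamma0_iff {I : Ideal A} {g : SL2 A} :
    g ∈ Gamma0 I ↔ g 0 1 ∈ (⊤ : Ideal A) ∧ g 1 0 ∈ I := by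
  simp [mem_Gamma0]

variable [IsLocalRing A] {I : Ideal A} [Nontrivial (A ⧸ I)]

instance : IsLocalHom (Ideal.Quotient.mk I) := .of_surjective _ Ideal.Quotient.mk_surjective

lemma exists_units_map_eq (v : (A ⧸ I)ˣ) : ∃ a : Aˣ, Ideal.Quotient.mk I a = v := by
  obtain ⟨a, ha⟩ := IsLocalRing.surjective_units_map_of_local_ringHom (Ideal.Quotient.mk I)
    Ideal.Quotient.mk_surjective inferInstance v
  exact ⟨a, congrArg Units.val ha⟩

lemma diagChar_surjective : Function.Surjective (diagChar I) := fun v => by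
  obtain ⟨a, ha⟩ := exists_units_map_eq v
  exact ⟨⟨diagSL a, diagSL_mem_Gamma0 I a⟩, Units.ext ha⟩

/-- If `a ≡ 1` modulo `I`, then `diagSL a` agrees with `upper 1 * lower (a - 1)` up to elementary
matrices of `Γ₀(I)`. -/
lemma ker_diagChar_le (f : Gamma0 I →* N) (hu : ∃ u : Aˣ, IsUnit ((u : A) ^ 2 - 1)) :
    (diagChar I).ker ≤ f.ker := fun b hb => by
  obtain ⟨u, hu⟩ := hu
  have hb' : Ideal.Quotient.mk I (b.1 0 0) = 1 := congrArg Units.val hb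
  obtain ⟨a, ha⟩ : IsUnit (b.1 0 0) := isUnit_of_map_unit (Ideal.Quotient.mk I) _ (hb' ▸ isUnit_one)
  have haI : (a : A) - 1 ∈ I := by
    rwa [ha, ← Ideal.Quotient.eq_zero_iff_mem, map_sub, map_one, sub_eq_zero]
  let g : Gamma0 I := ⟨upper 1, upper_mem mem_Gamma0_iff trivial⟩ *
    ⟨lower (a - 1), lower_mem mem_Gamma0_iff haI⟩
  have hg : g.1 0 0 = a := by simp [g, Matrix.mul_apply, upper_coe, lower_coe]
  rw [MonoidHom.mem_ker, map_eq_map_diagSL mem_Gamma0_iff f hu ha.symm,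
    ← map_eq_map_diagSL mem_Gamma0_iff f hu hg, map_mul,
    map_upper_eq_one mem_Gamma0_iff f hu trivial, map_lower_eq_one mem_Gamma0_iff f hu haI, one_mul]

lemma exists_comp_diagChar_eq (f : Gamma0 I →* N) (hu : ∃ u : Aˣ, IsUnit ((u : A) ^ 2 - 1)) :
    ∃ ε : (A ⧸ I)ˣ →* N, ε.comp (diagChar I) = f :=
  ⟨(diagChar I).liftOfSurjective diagChar_surjective ⟨f, ker_diagChar_le f hu⟩,
    (diagChar I).liftOfRightInverse_comp _ _ ⟨f, ker_diagChar_le f hu⟩⟩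

lemma exists_isUnit_sq_sub_one (h : 3 < ENat.card (IsLocalRing.ResidueField A)) :
    ∃ u : Aˣ, IsUnit ((u : A) ^ 2 - 1) := by
  classical
  rw [← Set.encard_univ, ← IsLocalRing.residue_surjective.range_eq] at h
  obtain ⟨a, ha⟩ := exists_apply_notMem_of_card_lt (s := {0, 1, -1})
    (h.trans_le' (mod_cast Finset.card_le_three))
  simp only [Finset.mem_insert, Finset.mem_singleton, not_or] at ha
  obtain ⟨u, rfl⟩ := (IsLocalRing.residue_ne_zero_iff_isUnit a).1 ha.1
  refine ⟨u, (IsLocalRing.residue_ne_zero_iff_isUnit _).1 ?_⟩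
  rw [map_sub, map_pow, map_one, sub_ne_zero, Ne, sq_eq_one_iff, not_or]
  exact ha.2

end SpecialLinear

/-! ### The Grothendieck–Witt ring -/

section GrothendieckWitt

variable {R V : Type*} [CommRing R] [AddCommGroup V]

/-- The class `⟨u⟩` of a unit `u` in `GW(R)`. -/
def gw : Rˣ →* GWq ℤ R :=
  (Ideal.Quotient.mk (StRel ℤ R)).toMonoidHom.comp
    ((MonoidAlgebra.of ℤ (SqCl R)).comp (QuotientGroup.mk' _))

lemma sqc_mul_sq (u v : Rˣ) : sqc (u * v ^ 2) = sqc u :=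
  (QuotientGroup.eq.2 ⟨v, by simp⟩ : sqc u = sqc (u * v ^ 2)).symm

lemma exists_eq_mul_sq_of_sqc_eq {u v : Rˣ} (h : sqc u = sqc v) : ∃ t, v = u * t ^ 2 := by
  obtain ⟨t, ht⟩ := QuotientGroup.eq.1 h
  exact ⟨t, eq_mul_of_inv_mul_eq ht.symm⟩

lemma gcl_mul (u v : Rˣ) : gcl ℤ (u * v) = gcl ℤ u * gcl ℤ v :=
  map_mul (MonoidAlgebra.of ℤ (SqCl R)) (sqc u) (sqc v)

lemma gw_congr {u v : Rˣ} (h : sqc u = sqc v) : gw u = gw v :=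
  congrArg (fun g => Ideal.Quotient.mk (StRel ℤ R) (MonoidAlgebra.of ℤ _ g)) h

lemma gw_sq (u : Rˣ) : gw u ^ 2 = 1 := by
  rw [← map_pow, ← one_mul (u ^ 2), gw_congr (sqc_mul_sq 1 u), map_one]

lemma gw_inv (u : Rˣ) : gw u⁻¹ = gw u := by
  rw [← gw_congr (sqc_mul_sq u⁻¹ u), sq, inv_mul_cancel_left]

lemma gw_steinberg {a b : Rˣ} (h : (a : R) + b = 1) : (gw a - 1) * (gw b - 1) = 0 := by
  have hb : (1 : R) - a = b := sub_eq_of_eq_add' h.symm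
  have hmem : gcc ℤ a * gcc ℤ b ∈ StRel ℤ R :=
    Ideal.subset_span ⟨⟨a, hb ▸ b.isUnit⟩, by
      rw [show WU.usub ⟨a, hb ▸ b.isUnit⟩ = b from Units.ext ((WU.usub_coe _).trans hb)]⟩
  exact Ideal.Quotient.eq_zero_iff_mem.2 hmem

/-- The Steinberg relation for the cross ratios `a` and `1 - a` of four points of a line, in terms
of the determinants of representing vectors. -/
lemma gw_four_term {d₀₁ d₀₂ d₀₃ d₁₂ d₁₃ d₂₃ : Rˣ}
    (h : (d₀₁ * d₂₃ + d₀₃ * d₁₂ : R) = d₀₂ * d₁₃) :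
    gw (d₁₂ * d₂₃ * d₁₃) - gw (d₀₂ * d₂₃ * d₀₃) + gw (d₀₁ * d₁₃ * d₀₃)
      - gw (d₀₁ * d₁₂ * d₀₂) = 0 := by
  have hab : ((d₀₁ * d₂₃ * (d₀₂ * d₁₃)⁻¹ : Rˣ) + (d₀₃ * d₁₂ * (d₀₂ * d₁₃)⁻¹ : Rˣ) : R) = 1 := by
    rw [Units.val_mul, Units.val_mul (d₀₃ * d₁₂), ← add_mul, Units.mul_inv_eq_one]
    exact_mod_cast h
  have hst := gw_steinberg hab
  simp only [map_mul, gw_inv] at hst ⊢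
  grind [gw_sq]

lemma gring_hom_ext {f f' : GRing ℤ R →+ V} (h : ∀ u, f (gcl ℤ u) = f' (gcl ℤ u)) : f = f' := by
  refine AddMonoidHom.ext fun x => ?_
  induction x using MonoidAlgebra.induction_on with
  | of g => exact QuotientGroup.induction_on g h
  | add x y hx hy => rw [map_add, map_add, hx, hy]
  | smul n x hx => rw [map_zsmul, map_zsmul, hx]

lemma gw_hom_ext {f f' : GWq ℤ R →+ V} (h : ∀ u, f (gw u) = f' (gw u)) : f = f' := by
  ext x
  obtain ⟨y, rfl⟩ := Ideal.Quotient.mk_surjective x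
  let π : GRing ℤ R →+ GWq ℤ R := (Ideal.Quotient.mk (StRel ℤ R)).toAddMonoidHom
  exact DFunLike.congr_fun (gring_hom_ext h : f.comp π = f'.comp π) y

lemma IfundGW_eq_span : IfundGW ℤ R = Ideal.span (Set.range fun u : Rˣ => gw u - 1) := by
  rw [IfundGW, augId, Ideal.map_span, ← Set.range_comp]
  exact congrArg Ideal.span
    ((QuotientGroup.mk_surjective (s := (powMonoidHom 2 : Rˣ →* Rˣ).range)).range_comp _).symm

lemma map_eq_zero_of_mem_span {S : Type*} [CommRing S] {s : Set S} (f : S →+ V)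
    (h : ∀ r, ∀ x ∈ s, f (r * x) = 0) {x : S} (hx : x ∈ Ideal.span s) : f x = 0 := by
  induction hx using Submodule.closure_induction with
  | zero => exact map_zero f
  | add x y _ _ hx hy => rw [map_add, hx, hy, add_zero]
  | smul_mem r x hx => exact h r x hx

lemma map_eq_zero_of_mem_IfundGW_sq {ψ : GWq ℤ R →+ V} (n : V) (ε : Rˣ →* Multiplicative V)
    (h : ∀ u, ψ (gw u) = n + (ε u).toAdd) {x : GWq ℤ R} (hx : x ∈ IfundGW ℤ R ^ 2) :
    ψ x = 0 := by
  rw [IfundGW_eq_span, sq, Ideal.span_mul_span'] at hx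
  refine map_eq_zero_of_mem_span ψ ?_ hx
  rintro r _ ⟨_, ⟨a, rfl⟩, _, ⟨b, rfl⟩, rfl⟩
  let μ : GWq ℤ R →+ GWq ℤ R := AddMonoidHom.mulRight ((gw a - 1) * (gw b - 1))
  refine DFunLike.congr_fun (gw_hom_ext (f := ψ.comp μ) (f' := 0) fun c => ?_) r
  have hexp : gw c * ((gw a - 1) * (gw b - 1)) =
      gw (c * a * b) - gw (c * a) - gw (c * b) + gw c := by
    simp only [map_mul]; ring
  simp only [μ, AddMonoidHom.comp_apply, AddMonoidHom.mulRight_apply, AddMonoidHom.zero_apply, hexp,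
    map_add, map_sub, h, map_mul ε, toAdd_mul]
  abel

/-- The homomorphism `u ↦ ⟨⟨u⟩⟩` from the units of `R` to `GW(R) / I²(R)`. -/
def pfisterClass : Rˣ →* Multiplicative (GWq ℤ R ⧸ IfundGW ℤ R ^ 2) where
  toFun u := .ofAdd (Ideal.Quotient.mk _ (gw u - 1))
  map_one' := by rw [map_one, sub_self, map_zero, ofAdd_zero]
  map_mul' u v := by
    have hmem : ∀ w : Rˣ, gw w - 1 ∈ IfundGW ℤ R := fun w =>
      IfundGW_eq_span (R := R) ▸ Ideal.subset_span ⟨w, rfl⟩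
    rw [← ofAdd_add, ← map_add]
    refine congrArg _ (Ideal.Quotient.eq.2 ?_)
    convert sq (IfundGW ℤ R) ▸ Ideal.mul_mem_mul (hmem u) (hmem v) using 1
    rw [map_mul]; ring

lemma mk_gw_eq (u : Rˣ) : Ideal.Quotient.mk (IfundGW ℤ R ^ 2) (gw u) =
    1 + (pfisterClass u).toAdd := by
  simp [pfisterClass]

lemma pfisterClass_sq (u : Rˣ) : pfisterClass u ^ 2 = 1 := by
  rw [← map_pow]
  simp [pfisterClass, gw_sq]

lemma exists_gw_hom (b : SqCl R → V) (h : ∀ u v c : Rˣ, (u : R) + v = 1 →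
      b (sqc (c * u)) - b (sqc (c * u * v)) + b (sqc (c * v)) - b (sqc c) = 0) :
    ∃ B : GWq ℤ R →+ V, ∀ u, B (gw u) = b (sqc u) := by
  let f : GRing ℤ R →+ V := (Finsupp.linearCombination ℤ b).toAddMonoidHom.comp
    MonoidAlgebra.coeffAddEquiv.toAddMonoidHom
  have hf : ∀ u, f (gcl ℤ u) = b (sqc u) := fun u =>
    (Finsupp.linearCombination_single ℤ _ _).trans (one_smul ℤ _)
  have hker : ∀ x ∈ (StRel ℤ R).toAddSubgroup, f x = 0 := fun x hx => by
    refine map_eq_zero_of_mem_span f ?_ hx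
    rintro r _ ⟨u, rfl⟩
    let μ : GRing ℤ R →+ GRing ℤ R := AddMonoidHom.mulRight (gcc ℤ (u : Rˣ) * gcc ℤ u.usub)
    refine DFunLike.congr_fun (gring_hom_ext (f := f.comp μ) (f' := 0) fun c => ?_) r
    have hexp : gcl ℤ c * (gcc ℤ (u : Rˣ) * gcc ℤ u.usub) =
        gcl ℤ (c * (u : Rˣ) * u.usub) - gcl ℤ (c * (u : Rˣ)) - gcl ℤ (c * u.usub) + gcl ℤ c := by
      simp only [gcc, gcl_mul]; ring
    have hst := h u u.usub c (by rw [WU.usub_coe, add_sub_cancel])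
    simp only [μ, AddMonoidHom.comp_apply, AddMonoidHom.mulRight_apply, hexp, map_add, map_sub, hf]
    linear_combination (norm := (simp only [AddMonoidHom.zero_apply]; abel)) -hst
  exact ⟨QuotientAddGroup.lift _ f hker, hf⟩

end GrothendieckWitt

/-! ### The projective line over `A ⧸ I` -/

section ProjectiveLine

open Matrix

variable {A : Type*} [CommRing A]

/-- The projective line over `A ⧸ I` for a local ring `A`, as a homogeneous space; the coset of `g`
is the point spanned by the first column of `g`. -/
abbrev ProjLine (I : Ideal A) : Type _ := SL2 A ⧸ Gamma0 I

/-- The determinant of the first columns of two matrices. -/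
def colDet (g h : SL2 A) : A := g 0 0 * h 1 0 - g 1 0 * h 0 0

lemma inv_mul_apply_one_zero (g h : SL2 A) : (g⁻¹ * h) 1 0 = colDet g h := by
  simp [colDet, mul_apply, adjugate_fin_two]
  ring_nf

lemma colDet_mul_mul (γ g h : SL2 A) : colDet (γ * g) (γ * h) = colDet g h := by
  rw [← inv_mul_apply_one_zero, ← inv_mul_apply_one_zero]
  group

lemma colDet_plucker (g h k l : SL2 A) :
    colDet g h * colDet k l + colDet g l * colDet h k = colDet g k * colDet h l := by
  simp only [colDet]
  ring

variable {I : Ideal A}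

lemma mk_colDet_mul_coe (g h : SL2 A) (b b' : Gamma0 I) :
    Ideal.Quotient.mk I (colDet (g * b) (h * b')) =
      diagChar I b * diagChar I b' * Ideal.Quotient.mk I (colDet g h) := by
  have hb : Ideal.Quotient.mk I (b.1 1 0) = 0 := Ideal.Quotient.eq_zero_iff_mem.2 b.2
  have hb' : Ideal.Quotient.mk I (b'.1 1 0) = 0 := Ideal.Quotient.eq_zero_iff_mem.2 b'.2
  simp only [colDet, sl_mul_apply, map_sub, map_mul, map_add, diagChar_coe, hb, hb']
  ring

namespace ProjLine

lemma mk_eq_mk_iff {g h : SL2 A} : (g : ProjLine I) = h ↔ colDet g h ∈ I := by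
  rw [QuotientGroup.eq, mem_Gamma0, inv_mul_apply_one_zero]

lemma smul_mk_eq_mk_iff {γ g h : SL2 A} : γ • (g : ProjLine I) = h ↔ colDet (γ * g) h ∈ I :=
  mk_eq_mk_iff

/-- The point `(1 : 0)`. -/
def infty : ProjLine I := (1 : SL2 A)

/-- The point `(v : 1)`. -/
def num (v : A) : ProjLine I := (upper v * weyl : SL2 A)

lemma colDet_one_num (v : A) : colDet 1 (upper v * weyl) = 1 := by
  simp [colDet, mul_apply, upper_coe, weyl_coe]

lemma colDet_num_num (v w : A) : colDet (upper v * weyl) (upper w * weyl) = v - w := by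
  simp [colDet, mul_apply, upper_coe, weyl_coe]

lemma smul_infty {γ : SL2 A} (h : γ ∈ Gamma0 I) : γ • (infty : ProjLine I) = infty :=
  smul_mk_eq_mk_iff.2 (by simpa [colDet] using mem_Gamma0.1 h)

lemma diagSL_smul_infty (a : Aˣ) : diagSL a • (infty : ProjLine I) = infty :=
  smul_infty (diagSL_mem_Gamma0 I a)

lemma diagSL_smul_num {a : Aˣ} {v w : A}
    (h : Ideal.Quotient.mk I (a ^ 2 * v) = Ideal.Quotient.mk I w) :
    diagSL a • (num v : ProjLine I) = num w := by
  refine smul_mk_eq_mk_iff.2 ?_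
  have : colDet (diagSL a * (upper v * weyl)) (upper w * weyl) = (a⁻¹ : Aˣ) * (a ^ 2 * v - w) := by
    simp [colDet, mul_apply, upper_coe, weyl_coe, diagSL_coe]
    linear_combination (-(a * v) : A) * a.inv_mul
  rw [this]
  exact I.mul_mem_left _ (Ideal.Quotient.eq.1 h)

/-- The determinant of the chosen representatives of two points. -/
def det (x y : ProjLine I) : A ⧸ I := Ideal.Quotient.mk I (colDet x.out y.out)

open Classical in
/-- The determinant of two points as a unit; the junk value is `1` when it is not a unit. -/
def detUnit (x y : ProjLine I) : (A ⧸ I)ˣ := if h : IsUnit (det x y) then h.unit else 1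

/-- The scalar by which `γ` rescales the chosen representative of a point. -/
def multiplier (γ : SL2 A) (x : ProjLine I) : (A ⧸ I)ˣ := diagChar I (cosetCocycle γ x)

lemma multiplier_mul (γ δ : SL2 A) (x : ProjLine I) :
    multiplier (γ * δ) x = multiplier γ (δ • x) * multiplier δ x := by
  rw [multiplier, cosetCocycle_mul, map_mul, multiplier, multiplier]

lemma multiplier_mk {γ g : SL2 A} {b : Gamma0 I} (h : γ * g = g * b) :
    multiplier γ (g : ProjLine I) = diagChar I b :=
  map_cosetCocycle_mk (diagChar I) h

lemma multiplier_diagSL_infty {a : Aˣ} {u : (A ⧸ I)ˣ} (ha : Ideal.Quotient.mk I a = u) :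
    multiplier (diagSL a) (infty : ProjLine I) = u :=
  (multiplier_mk (b := ⟨_, diagSL_mem_Gamma0 I a⟩) (by simp)).trans (Units.ext ha)

lemma multiplier_diagSL_num_zero {a : Aˣ} {u : (A ⧸ I)ˣ} (ha : Ideal.Quotient.mk I a = u) :
    multiplier (diagSL a) (num 0 : ProjLine I) = u⁻¹ := by
  have h : diagSL a * (upper 0 * weyl) = upper 0 * weyl * diagSL a⁻¹ := by
    apply sl_ext <;> simp [sl_mul_apply, weyl_coe, diagSL_coe]
  rw [num, multiplier_mk (b := ⟨_, diagSL_mem_Gamma0 I a⁻¹⟩) h, eq_inv_iff_mul_eq_one]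
  ext
  rw [Units.val_mul, diagChar_coe, ← ha]
  simp [diagSL_coe, ← map_mul]

lemma detUnit_coe {x y : ProjLine I} (h : IsUnit (det x y)) : (detUnit x y : A ⧸ I) = det x y := by
  rw [detUnit, dif_pos h, IsUnit.unit_spec]

lemma det_smul_smul (γ : SL2 A) (x y : ProjLine I) :
    det x y = multiplier γ x * multiplier γ y * det (γ • x) (γ • y) := by
  rw [det, ← colDet_mul_mul γ, ← out_mul_cosetCocycle, ← out_mul_cosetCocycle, mk_colDet_mul_coe]
  rfl

lemma det_plucker (x y z w : ProjLine I) :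
    det x y * det z w + det x w * det y z = det x z * det y w := by
  simp only [det, ← map_mul, ← map_add, colDet_plucker]

/-- The product of the three determinants of a triple of points. -/
def tripleUnit (x y z : ProjLine I) : (A ⧸ I)ˣ := detUnit x y * detUnit y z * detUnit x z

lemma sqc_tripleUnit_mk {g h k : SL2 A} {a b c : (A ⧸ I)ˣ}
    (ha : Ideal.Quotient.mk I (colDet g h) = a) (hb : Ideal.Quotient.mk I (colDet h k) = b)
    (hc : Ideal.Quotient.mk I (colDet g k) = c) :
    sqc (tripleUnit (g : ProjLine I) h k) = sqc (a * b * c) := by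
  obtain ⟨s, hs⟩ := QuotientGroup.mk_out_eq_mul (Gamma0 I) g
  obtain ⟨t, ht⟩ := QuotientGroup.mk_out_eq_mul (Gamma0 I) h
  obtain ⟨r, hr⟩ := QuotientGroup.mk_out_eq_mul (Gamma0 I) k
  have key {g h : SL2 A} {s t : Gamma0 I} {a : (A ⧸ I)ˣ} (hs : (g : ProjLine I).out = g * s)
      (ht : (h : ProjLine I).out = h * t) (ha : Ideal.Quotient.mk I (colDet g h) = a) :
      detUnit (g : ProjLine I) h = diagChar I s * diagChar I t * a := by
    have hdet : det (g : ProjLine I) h = (diagChar I s * diagChar I t * a : (A ⧸ I)ˣ) := by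
      rw [det, hs, ht, mk_colDet_mul_coe, ha, Units.val_mul, Units.val_mul]
    exact Units.ext (by rw [detUnit_coe (hdet ▸ Units.isUnit _), hdet])
  rw [tripleUnit, key hs ht ha, key ht hr hb, key hs hr hc,
    ← sqc_mul_sq (a * b * c) (diagChar I s * diagChar I t * diagChar I r)]
  congr 1
  simp only [pow_two]
  ac_rfl

lemma sqc_tripleUnit_infty_num_num {v w : A} {u : (A ⧸ I)ˣ} (hu : Ideal.Quotient.mk I (v - w) = u) :
    sqc (tripleUnit (infty : ProjLine I) (num v) (num w)) = sqc u := by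
  have h₁ (v : A) : Ideal.Quotient.mk I (colDet 1 (upper v * weyl)) = (1 : (A ⧸ I)ˣ) := by
    simp [colDet_one_num]
  rw [← one_mul u, ← mul_one (1 * u)]
  exact sqc_tripleUnit_mk (h₁ v) (by rw [colDet_num_num, hu]) (h₁ w)

lemma sqc_tripleUnit_num_num_num {v w x : A} {a b c : (A ⧸ I)ˣ}
    (ha : Ideal.Quotient.mk I (v - w) = a) (hb : Ideal.Quotient.mk I (w - x) = b)
    (hc : Ideal.Quotient.mk I (v - x) = c) :
    sqc (tripleUnit (num v : ProjLine I) (num w) (num x)) = sqc (a * b * c) :=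
  sqc_tripleUnit_mk (by rw [colDet_num_num, ha]) (by rw [colDet_num_num, hb])
    (by rw [colDet_num_num, hc])

/-- Reduction to the projective line over the residue field. Two points are in general position
when their reductions differ. -/
def red [IsLocalRing A] (I : Ideal A) [Nontrivial (A ⧸ I)] :
    ProjLine I →[SL2 A] ProjLine (IsLocalRing.maximalIdeal A) where
  toFun := Subgroup.quotientMapOfLE fun _ h =>
    IsLocalRing.le_maximalIdeal (Ideal.Quotient.nontrivial_iff.1 inferInstance) h
  map_smul' γ := by
    rintro ⟨g⟩
    rfl

variable [IsLocalRing A] [Nontrivial (A ⧸ I)]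

lemma red_mk_ne_iff {g h : SL2 A} :
    red I (g : ProjLine I) ≠ red I h ↔ IsUnit (colDet g h) := by
  rw [← not_iff_not, not_not, ← mem_nonunits_iff, ← IsLocalRing.mem_maximalIdeal]
  exact mk_eq_mk_iff

lemma red_ne_iff {x y : ProjLine I} : red I x ≠ red I y ↔ IsUnit (det x y) := by
  rw [det, isUnit_map_iff (Ideal.Quotient.mk I), ← red_mk_ne_iff (I := I), QuotientGroup.out_eq',
    QuotientGroup.out_eq']

lemma red_infty_ne_num (v : A) : red I infty ≠ red I (num v) := by
  rw [infty, num, red_mk_ne_iff, colDet_one_num]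
  exact isUnit_one

lemma red_num_ne_num {v w : A} : red I (num v) ≠ red I (num w) ↔ IsUnit (v - w) := by
  rw [num, num, red_mk_ne_iff, colDet_num_num]

lemma red_num_ne_num_of_mk_eq {v w : A} {u : (A ⧸ I)ˣ} (h : Ideal.Quotient.mk I (v - w) = u) :
    red I (num v) ≠ red I (num w) :=
  red_num_ne_num.2 (isUnit_of_map_unit (Ideal.Quotient.mk I) _ (h ▸ u.isUnit))

lemma detUnit_smul_smul (γ : SL2 A) {x y : ProjLine I} (h : red I x ≠ red I y) :
    detUnit x y = multiplier γ x * multiplier γ y * detUnit (γ • x) (γ • y) := by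
  ext
  push_cast
  rw [detUnit_coe (red_ne_iff.1 h), detUnit_coe (red_ne_iff.1 (apply_smul_ne γ h)), det_smul_smul γ]

lemma sqc_tripleUnit_smul (γ : SL2 A) {x y z : ProjLine I} (h : GenTriple (red I) x y z) :
    sqc (tripleUnit (γ • x) (γ • y) (γ • z)) = sqc (tripleUnit x y z) := by
  rw [tripleUnit, tripleUnit, detUnit_smul_smul γ h.ne₁₂, detUnit_smul_smul γ h.ne₁₃,
    detUnit_smul_smul γ h.ne₂₃,
    ← sqc_mul_sq _ (multiplier γ x * multiplier γ y * multiplier γ z)]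
  congr 1
  simp only [pow_two]
  ac_rfl

lemma exists_smul_eq_of_red_ne {x y : ProjLine I} (h : red I x ≠ red I y) :
    ∃ γ : SL2 A, γ • infty = x ∧ γ • num 0 = y := by
  obtain ⟨g, rfl⟩ := QuotientGroup.mk_surjective x
  obtain ⟨k, rfl⟩ := QuotientGroup.mk_surjective y
  obtain ⟨l, rfl⟩ : ∃ l, k = g * l := ⟨g⁻¹ * k, (mul_inv_cancel_left g k).symm⟩
  rw [red_mk_ne_iff, ← mul_one g, mul_assoc, one_mul, colDet_mul_mul] at h
  obtain ⟨u, hu⟩ : IsUnit (l 1 0) := by simpa [colDet] using h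
  refine ⟨g * upper (l 0 0 * (u⁻¹ : Aˣ)), smul_mk_eq_mk_iff.2 ?_, smul_mk_eq_mk_iff.2 ?_⟩
  · rw [mul_assoc, ← mul_one g, mul_assoc, colDet_mul_mul]
    simp [colDet, upper_coe]
  · rw [mul_assoc, colDet_mul_mul]
    simp [colDet, mul_apply, upper_coe, weyl_coe, ← hu]

lemma exists_eq_num {z : ProjLine I} (h : red I infty ≠ red I z) : ∃ v : A, z = num v := by
  obtain ⟨g, rfl⟩ := QuotientGroup.mk_surjective z
  obtain ⟨c, hc⟩ : IsUnit (g 1 0) := by simpa [colDet] using red_mk_ne_iff.1 h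
  refine ⟨g 0 0 * (c⁻¹ : Aˣ), mk_eq_mk_iff.2 ?_⟩
  simp [colDet, mul_apply, upper_coe, weyl_coe, ← hc, mul_comm, mul_left_comm]

lemma exists_smul_eq_num {x y z : ProjLine I} (h : GenTriple (red I) x y z) :
    ∃ (γ : SL2 A) (v : A) (u : (A ⧸ I)ˣ), Ideal.Quotient.mk I (0 - v) = u ∧
      γ • infty = x ∧ γ • num 0 = y ∧ γ • num v = z := by
  obtain ⟨γ, rfl, rfl⟩ := exists_smul_eq_of_red_ne h.ne₁₂
  have h₁₃ := apply_smul_ne γ⁻¹ h.ne₁₃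
  have h₂₃ := apply_smul_ne γ⁻¹ h.ne₂₃
  rw [inv_smul_smul] at h₁₃ h₂₃
  obtain ⟨v, hv⟩ := exists_eq_num h₁₃
  rw [hv, red_num_ne_num] at h₂₃
  obtain ⟨u, hu⟩ := h₂₃.map (Ideal.Quotient.mk I)
  exact ⟨γ, v, u, hu.symm, rfl, rfl, by rw [← hv, smul_inv_smul]⟩

lemma exists_smul_eq_of_sqc_tripleUnit_eq {x y z x' y' z' : ProjLine I}
    (h : GenTriple (red I) x y z) (h' : GenTriple (red I) x' y' z')
    (hs : sqc (tripleUnit x y z) = sqc (tripleUnit x' y' z')) :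
    ∃ γ : SL2 A, γ • x = x' ∧ γ • y = y' ∧ γ • z = z' := by
  obtain ⟨γ, v, u, hu, rfl, rfl, rfl⟩ := exists_smul_eq_num h
  obtain ⟨δ, w, t, ht, rfl, rfl, rfl⟩ := exists_smul_eq_num h'
  have gen {v : A} {u : (A ⧸ I)ˣ} (hu : Ideal.Quotient.mk I (0 - v) = u) :
      GenTriple (red I) infty (num 0) (num v) :=
    ⟨red_infty_ne_num 0, red_infty_ne_num v, red_num_ne_num_of_mk_eq hu⟩
  rw [sqc_tripleUnit_smul γ (gen hu), sqc_tripleUnit_smul δ (gen ht),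
    sqc_tripleUnit_infty_num_num hu, sqc_tripleUnit_infty_num_num ht] at hs
  obtain ⟨s, hs⟩ := exists_eq_mul_sq_of_sqc_eq hs
  obtain ⟨a, ha⟩ := exists_units_map_eq s
  refine ⟨δ * diagSL a * γ⁻¹, ?_, ?_, ?_⟩ <;> rw [mul_smul, inv_smul_smul, mul_smul]
  · rw [diagSL_smul_infty]
  · rw [diagSL_smul_num (w := 0) (by simp)]
  · rw [diagSL_smul_num (w := w)]
    have := congrArg Units.val hs
    push_cast [← hu, ← ht, ← ha] at this
    simp only [zero_sub, map_neg, map_mul, map_pow] at this ⊢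
    linear_combination this

lemma exists_eq_comp_sqc_tripleUnit {V : Type*} [Nonempty V]
    {T : ProjLine I → ProjLine I → ProjLine I → V}
    (hT : ∀ (γ : SL2 A) {x y z}, GenTriple (red I) x y z → T (γ • x) (γ • y) (γ • z) = T x y z) :
    ∃ b : SqCl (A ⧸ I) → V, ∀ {x y z}, GenTriple (red I) x y z →
      T x y z = b (sqc (tripleUnit x y z)) := by
  let S := {p : ProjLine I × ProjLine I × ProjLine I // GenTriple (red I) p.1 p.2.1 p.2.2}
  have hfac : (fun p : S => T p.1.1 p.1.2.1 p.1.2.2).FactorsThrough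
      fun p => sqc (tripleUnit p.1.1 p.1.2.1 p.1.2.2) := by
    rintro ⟨⟨x, y, z⟩, h⟩ ⟨⟨x', y', z'⟩, h'⟩ hs
    obtain ⟨γ, rfl, rfl, rfl⟩ := exists_smul_eq_of_sqc_tripleUnit_eq h h' hs
    exact (hT γ h).symm
  inhabit V
  exact ⟨Function.extend _ _ fun _ => default, fun {x y z} h =>
    (hfac.extend_apply _ (⟨(x, y, z), h⟩ : S)).symm⟩

lemma four_lt_encard_range_red (h : 3 < ENat.card (IsLocalRing.ResidueField A)) :
    4 < (Set.range (red I)).encard := by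
  let lift := Function.surjInv (IsLocalRing.residue_surjective (R := A))
  let f (a : IsLocalRing.ResidueField A) := red I (num (lift a))
  have hf : Function.Injective f := fun a b hab => by
    by_contra hne
    refine red_num_ne_num.2 ((IsLocalRing.residue_ne_zero_iff_isUnit _).1 ?_) hab
    have hlift := Function.surjInv_eq (IsLocalRing.residue_surjective (R := A))
    rwa [map_sub, hlift, hlift, sub_ne_zero]
  have hinfty : red I infty ∉ Set.range f := fun ⟨a, ha⟩ => red_infty_ne_num _ ha.symm
  calc (4 : ℕ∞) = 3 + 1 := rfl
    _ < (insert (red I infty) (Set.range f)).encard := by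
      rw [Set.encard_insert_of_notMem hinfty, ENat.add_lt_add_iff_right ENat.one_ne_top]
      exact h.trans_le hf.encard_range
    _ ≤ (Set.range (red I)).encard := by
      refine Set.encard_le_encard (Set.insert_subset ⟨_, rfl⟩ ?_)
      rintro _ ⟨a, rfl⟩
      exact ⟨_, rfl⟩

/-- The square class of `tripleUnit` in the Grothendieck–Witt ring. -/
def tripleClass (x y z : ProjLine I) : GWq ℤ (A ⧸ I) := gw (tripleUnit x y z)

lemma tripleClass_smul (γ : SL2 A) {x y z : ProjLine I} (h : GenTriple (red I) x y z) :
    tripleClass (γ • x) (γ • y) (γ • z) = tripleClass x y z :=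
  gw_congr (sqc_tripleUnit_smul γ h)

lemma isTripleCocycle_tripleClass : IsTripleCocycle (red I) tripleClass := by
  intro x y z w h hxw hyw hzw
  refine gw_four_term ?_
  rw [detUnit_coe (red_ne_iff.1 h.ne₁₂), detUnit_coe (red_ne_iff.1 h.ne₁₃),
    detUnit_coe (red_ne_iff.1 h.ne₂₃), detUnit_coe (red_ne_iff.1 hxw),
    detUnit_coe (red_ne_iff.1 hyw), detUnit_coe (red_ne_iff.1 hzw), det_plucker]

end ProjLine
end ProjectiveLine

/-! ### The image of the transgression -/

section Image

open ProjLine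

variable {A : Type*} [CommRing A] [IsLocalRing A] {I : Ideal A} [Nontrivial (A ⧸ I)]
  {V : Type*} [AddCommGroup V]

/-- A character `ε` of the units of `A ⧸ I` of order two and a constant `n` give a triple cocycle
with trivial transgression, since `n + ε (det x y)` is a primitive. -/
def quadraticTransgression (n : V) (ε : (A ⧸ I)ˣ →* Multiplicative V) (hε : ∀ u, ε u ^ 2 = 1) :
    Transgression (red I) fun x y z => n + (ε (tripleUnit x y z)).toAdd where
  primitive x y := n + (ε (detUnit x y)).toAdd
  potential γ x := (ε (multiplier γ x)).toAdd
  cocycle := 0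
  coboundary_eq {x y z} _ := by
    have h := congrArg Multiplicative.toAdd (hε (detUnit x z))
    simp only [tripleUnit, map_mul, toAdd_mul, pow_two, toAdd_one] at h ⊢
    linear_combination (norm := abel) -h
  smul_sub γ x y h := by
    have hy := congrArg Multiplicative.toAdd (hε (multiplier γ y))
    rw [detUnit_smul_smul γ h]
    simp only [map_mul, toAdd_mul, pow_two, toAdd_one] at hy ⊢
    linear_combination (norm := abel) -hy
  trivialization γ δ x := by
    simp only [multiplier_mul, map_mul, toAdd_mul, Pi.zero_apply]
    abel

lemma evalHomology_mem_IfundGW_sq (hres : 3 < ENat.card (IsLocalRing.ResidueField A))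
    (t : Transgression (red I) (tripleClass (I := I))) (x : GroupHomology.H ℤ (SL2 A) 2) :
    evalHomology t.trivialization.isTwoCocycle x ∈ IfundGW ℤ (A ⧸ I) ^ 2 := by
  have hcoh : IsCohomologous
      (t.map (Ideal.Quotient.mk (IfundGW ℤ (A ⧸ I) ^ 2) : _ →+ _)).cocycle 0 :=
    Transgression.isCohomologous (lt_trans (by norm_num) (four_lt_encard_range_red hres)) _
      (quadraticTransgression 1 pfisterClass pfisterClass_sq) fun _ => mk_gw_eq _
  rw [← Ideal.Quotient.eq_zero_iff_mem]
  exact (evalHomology_map t.trivialization.isTwoCocycle _ x).symm.trans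
    (DFunLike.congr_fun (hcoh.evalHomology_eq_zero _) x)

section Converse

lemma exists_potential_eq {η : SL2 A → ProjLine I → V} (hη : IsTrivialization η 0)
    (hu : ∃ u : Aˣ, IsUnit ((u : A) ^ 2 - 1)) :
    ∃ (ν : ProjLine I → V) (ε : (A ⧸ I)ˣ →* Multiplicative V),
      ∀ γ x, η γ x = ν (γ • x) - ν x + (ε (multiplier γ x)).toAdd := by
  obtain ⟨ν, hν⟩ := hη.exists_eq_sub_add
  let f : Gamma0 I →* Multiplicative V := MonoidHom.mk' (fun b => .ofAdd (η b infty)) fun b b' => by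
    have h := hη b b' infty
    rw [smul_infty b'.2, Pi.zero_apply, Pi.zero_apply, eq_comm, sub_eq_zero] at h
    rw [← ofAdd_add, h, Subgroup.coe_mul]
  obtain ⟨ε, hε⟩ := exists_comp_diagChar_eq f hu
  exact ⟨ν, ε, fun γ x => (hν γ x).trans <| congrArg _ <|
    congrArg Multiplicative.toAdd (DFunLike.congr_fun hε (cosetCocycle γ x)).symm⟩

variable {ε : (A ⧸ I)ˣ →* Multiplicative V} {φ : ProjLine I → ProjLine I → V}

lemma sq_eq_one_of_smul_sub (hφ : ∀ γ {x y}, red I x ≠ red I y →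
    φ (γ • x) (γ • y) - φ x y = (ε (multiplier γ y)).toAdd - (ε (multiplier γ x)).toAdd)
    (u : (A ⧸ I)ˣ) : ε u ^ 2 = 1 := by
  obtain ⟨a, ha⟩ := exists_units_map_eq u
  have h := hφ (diagSL a) (red_infty_ne_num 0)
  rw [diagSL_smul_infty, diagSL_smul_num (w := 0) (by simp), sub_self,
    multiplier_diagSL_infty ha, multiplier_diagSL_num_zero ha, map_inv, toAdd_inv] at h
  refine Multiplicative.toAdd.injective ?_
  rw [toAdd_pow, toAdd_one]
  linear_combination (norm := abel) h

lemma exists_eq_add_detUnit (hφ : ∀ γ {x y}, red I x ≠ red I y →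
    φ (γ • x) (γ • y) - φ x y = (ε (multiplier γ y)).toAdd - (ε (multiplier γ x)).toAdd) :
    ∃ n, ∀ {x y}, red I x ≠ red I y → φ x y = n + (ε (detUnit x y)).toAdd := by
  refine ⟨φ infty (num 0) - (ε (detUnit infty (num 0))).toAdd, fun {x y} h => ?_⟩
  obtain ⟨γ, rfl, rfl⟩ := exists_smul_eq_of_red_ne h
  have hγ := hφ γ (red_infty_ne_num (I := I) 0)
  have hdet := detUnit_smul_smul γ (red_infty_ne_num (I := I) 0)
  have hsq := congrArg Multiplicative.toAdd (sq_eq_one_of_smul_sub hφ (multiplier γ (num 0)))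
  rw [hdet]
  simp only [map_mul, toAdd_mul, pow_two, toAdd_one] at hsq ⊢
  linear_combination (norm := abel) hγ + hsq

lemma exists_eq_add_tripleUnit {T : ProjLine I → ProjLine I → ProjLine I → V}
    (t : Transgression (red I) T) (h : IsCohomologous t.cocycle 0)
    (hu : ∃ u : Aˣ, IsUnit ((u : A) ^ 2 - 1)) :
    ∃ (n : V) (ε : (A ⧸ I)ˣ →* Multiplicative V), (∀ u, ε u ^ 2 = 1) ∧
      ∀ {x y z}, GenTriple (red I) x y z → T x y z = n + (ε (tripleUnit x y z)).toAdd := by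
  obtain ⟨e, he⟩ := h
  have hη : IsTrivialization (fun γ x => t.potential γ x - e γ) 0 := fun γ δ x => by
    have h₁ := t.trivialization γ δ x
    rw [he] at h₁
    simp only [Pi.zero_apply] at h₁ ⊢
    linear_combination (norm := abel) h₁
  obtain ⟨ν, ε, hν⟩ := exists_potential_eq hη hu
  have hφ : ∀ γ {x y}, red I x ≠ red I y →
      (t.primitive (γ • x) (γ • y) - ν (γ • y) + ν (γ • x)) - (t.primitive x y - ν y + ν x) =
        (ε (multiplier γ y)).toAdd - (ε (multiplier γ x)).toAdd := fun γ x y hxy => by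
    linear_combination (norm := abel) t.smul_sub γ hxy + hν γ y - hν γ x
  obtain ⟨n, hn⟩ := exists_eq_add_detUnit (φ := fun x y => t.primitive x y - ν y + ν x) hφ
  have hsq := sq_eq_one_of_smul_sub (φ := fun x y => t.primitive x y - ν y + ν x) hφ
  refine ⟨n, ε, hsq, fun {x y z} g => ?_⟩
  rw [← t.coboundary_eq g,
    ← (quadraticTransgression n ε hsq).coboundary_eq g]
  dsimp only [quadraticTransgression]
  linear_combination (norm := abel) hn g.ne₁₂ - hn g.ne₁₃ + hn g.ne₂₃

lemma exists_sqc_tripleUnit_eq (u : (A ⧸ I)ˣ) : ∃ v : A,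
    GenTriple (red I) infty (num 0) (num v) ∧
      sqc (tripleUnit (infty : ProjLine I) (num 0) (num v)) = sqc u := by
  obtain ⟨v, hv⟩ := Ideal.Quotient.mk_surjective (-u : A ⧸ I)
  have hu : Ideal.Quotient.mk I (0 - v) = u := by rw [zero_sub, map_neg, hv, neg_neg]
  exact ⟨v, ⟨red_infty_ne_num 0, red_infty_ne_num v, red_num_ne_num_of_mk_eq hu⟩,
    sqc_tripleUnit_infty_num_num hu⟩

lemma map_eq_zero_of_map_evalHomology_eq_zero {t : Transgression (red I) (tripleClass (I := I))}
    (hu : ∃ u : Aˣ, IsUnit ((u : A) ^ 2 - 1)) {ψ : GWq ℤ (A ⧸ I) →+ QModZ}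
    (h : ∀ x, ψ (evalHomology t.trivialization.isTwoCocycle x) = 0) {x : GWq ℤ (A ⧸ I)}
    (hx : x ∈ IfundGW ℤ (A ⧸ I) ^ 2) : ψ x = 0 := by
  have hzero : evalHomology (t.map ψ).trivialization.isTwoCocycle = 0 :=
    AddMonoidHom.ext fun x => (evalHomology_map t.trivialization.isTwoCocycle ψ x).trans (h x)
  obtain ⟨n, ε, hε, hT⟩ := exists_eq_add_tripleUnit (t.map ψ)
    (isCohomologous_zero_of_evalHomology_eq_zero _ hzero) hu
  refine map_eq_zero_of_mem_IfundGW_sq n ε (fun u => ?_) hx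
  obtain ⟨v, g, hv⟩ := exists_sqc_tripleUnit_eq u
  obtain ⟨s, rfl⟩ := exists_eq_mul_sq_of_sqc_eq hv
  rw [gw_congr (sqc_mul_sq _ _), map_mul, map_pow, hε, mul_one, ← hT g, tripleClass]

end Converse

end Image

/-! ### The kernel of the transgression -/

section Kernel

open ProjLine

section PairStabilizer

variable {A : Type*} [CommRing A] {I : Ideal A}

lemma mem_pairStabilizer_infty_num_zero {g : SL2 A} :
    g ∈ pairStabilizer (SL2 A) (infty : ProjLine I) (num 0) ↔ g 0 1 ∈ I ∧ g 1 0 ∈ I := by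
  rw [Subgroup.mem_inf, MulAction.mem_stabilizer_iff, MulAction.mem_stabilizer_iff, infty, num,
    smul_mk_eq_mk_iff, smul_mk_eq_mk_iff, and_comm]
  simp [colDet, sl_mul_apply, weyl_coe]

/-- The diagonal matrices, as elements of the stabilizer of `(∞, 0)`. -/
def diagHom (I : Ideal A) : Aˣ →* pairStabilizer (SL2 A) (infty : ProjLine I) (num 0) :=
  MonoidHom.mk' (fun a => ⟨diagSL a, diagSL_mem mem_pairStabilizer_infty_num_zero a⟩) fun a b => by
    ext1
    apply sl_ext <;> simp [sl_mul_apply, diagSL_coe, mul_comm]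

section PairCharacter

variable {V : Type*} [AddCommGroup V] {η : SL2 A → ProjLine I → V} {c : SL2 A → SL2 A → V}
  (hη : IsTrivialization η c) {u : Aˣ} (hu : IsUnit ((u : A) ^ 2 - 1))
include hη hu

lemma sub_eq_of_conj {γ s : SL2 A} {a : Aˣ} (h₀₀ : (γ⁻¹ * s * γ) 0 0 = a)
    (h₀₁ : (γ⁻¹ * s * γ) 0 1 ∈ I) (h₁₀ : (γ⁻¹ * s * γ) 1 0 ∈ I) :
    η s (γ • num 0) - η s (γ • infty) = (hη.pairChar infty (num 0) (diagHom I a)).toAdd := by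
  have ht := mem_pairStabilizer_infty_num_zero.2 ⟨h₀₁, h₁₀⟩
  exact (hη.sub_conj (by group) ht).trans (map_eq_map_diagSL mem_pairStabilizer_infty_num_zero
    (hη.pairChar infty (num 0)) hu (g := ⟨_, ht⟩) h₀₀)

/-- The matrix `diagSL a` acts on the pairs `(∞, 1)` and `(0, 1)` as conjugates of `diagSL a` and
`diagSL a⁻¹` act on `(∞, 0)`; the differences along `∞`, `0`, `1` add up. -/
lemma pairChar_diagHom_eq_one {a : Aˣ} (ha : (a : A) - (a⁻¹ : Aˣ) ∈ I) :
    hη.pairChar infty (num 0) (diagHom I a) = 1 := by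
  have h₀ : η (diagSL a) (num 0) - η (diagSL a) infty =
      (hη.pairChar infty (num 0) (diagHom I a)).toAdd := rfl
  have h₁ := sub_eq_of_conj hη hu (γ := upper 1) (s := diagSL a) (a := a)
    (by simp [sl_mul_apply, upper_coe, diagSL_coe, Matrix.adjugate_fin_two])
    (by simpa [sl_mul_apply, upper_coe, diagSL_coe, Matrix.adjugate_fin_two, sub_eq_add_neg]
      using ha)
    (by simp [sl_mul_apply, upper_coe, diagSL_coe, Matrix.adjugate_fin_two])
  have h₂ := sub_eq_of_conj hη hu (γ := weyl * upper (-1)) (s := diagSL a) (a := a⁻¹)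
    (by simp [sl_mul_apply, upper_coe, weyl_coe, diagSL_coe, Matrix.adjugate_fin_two])
    (by simpa [sl_mul_apply, upper_coe, weyl_coe, diagSL_coe, Matrix.adjugate_fin_two,
      sub_eq_add_neg, add_comm] using ha)
    (by simp [sl_mul_apply, upper_coe, weyl_coe, diagSL_coe, Matrix.adjugate_fin_two])
  have e₁ : upper (1 : A) • (infty : ProjLine I) = infty :=
    smul_infty (by simp [mem_Gamma0, upper_coe])
  have e₂ : upper (1 : A) • (num 0 : ProjLine I) = num 1 := by
    rw [num, num, smul_mk_eq_mk_iff]; simp [colDet, Matrix.mul_apply, upper_coe, weyl_coe]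
  have e₃ : (weyl * upper (-1 : A)) • (infty : ProjLine I) = num 0 := by
    rw [num, infty, smul_mk_eq_mk_iff]; simp [colDet, Matrix.mul_apply, upper_coe, weyl_coe]
  have e₄ : (weyl * upper (-1 : A)) • (num 0 : ProjLine I) = num 1 := by
    rw [num, num, smul_mk_eq_mk_iff]; simp [colDet, Matrix.mul_apply, upper_coe, weyl_coe]
  rw [e₁, e₂] at h₁
  rw [e₃, e₄, map_inv, map_inv, toAdd_inv] at h₂
  refine Multiplicative.toAdd.injective ?_
  rw [toAdd_one]
  linear_combination (norm := abel) h₂ + h₀ - h₁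

end PairCharacter

lemma exists_sq_map_eq_pairChar {η : SL2 A → ProjLine I → QModZ} {c : SL2 A → SL2 A → QModZ}
    (hη : IsTrivialization η c)
    (hu : ∃ u : Aˣ, IsUnit ((u : A) ^ 2 - 1)) :
    ∃ ε : (A ⧸ I)ˣ →* Multiplicative QModZ, ∀ {a : Aˣ} {w : (A ⧸ I)ˣ},
      Ideal.Quotient.mk I a = w → ε w ^ 2 = hη.pairChar infty (num 0) (diagHom I a) := by
  obtain ⟨u, hu⟩ := hu
  obtain ⟨ε, hε⟩ := exists_extend_mulCharacter
    ((powMonoidHom 2).comp (Units.map (Ideal.Quotient.mk I : A →* A ⧸ I)))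
    ((hη.pairChar infty (num 0)).comp (diagHom I)) fun a ha => by
      refine pairChar_diagHom_eq_one hη hu ?_
      have h : Units.map (Ideal.Quotient.mk I : A →* A ⧸ I) a = (Units.map _ a)⁻¹ :=
        eq_inv_of_mul_eq_one_left ((pow_two _).symm.trans ha)
      rw [← Ideal.Quotient.eq_zero_iff_mem, map_sub, sub_eq_zero]
      rw [← map_inv] at h
      exact congrArg Units.val h
  refine ⟨ε, fun {a w} h => ?_⟩
  rw [show w = Units.map (Ideal.Quotient.mk I : A →* A ⧸ I) a from Units.ext h.symm, ← map_pow]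
  exact DFunLike.congr_fun hε a

end PairStabilizer

variable {A : Type*} [CommRing A] [IsLocalRing A] {I : Ideal A} [Nontrivial (A ⧸ I)]

section Universality

variable {V : Type*} [AddCommGroup V] {T : ProjLine I → ProjLine I → ProjLine I → V}

/-- The Steinberg relation is the cocycle condition at the points `∞`, `0`, `-c`, `-c v⁻¹`. -/
lemma steinberg_of_isTripleCocycle {b : SqCl (A ⧸ I) → V} (hT : IsTripleCocycle (red I) T)
    (hb : ∀ {x y z}, GenTriple (red I) x y z → T x y z = b (sqc (tripleUnit x y z)))
    (u v c : (A ⧸ I)ˣ) (huv : (u : A ⧸ I) + v = 1) :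
    b (sqc (c * u)) - b (sqc (c * u * v)) + b (sqc (c * v)) - b (sqc c) = 0 := by
  obtain ⟨p, hp⟩ := Ideal.Quotient.mk_surjective (-c : A ⧸ I)
  obtain ⟨q, hq⟩ := Ideal.Quotient.mk_surjective (-(c * v⁻¹ : (A ⧸ I)ˣ) : A ⧸ I)
  have h0p : Ideal.Quotient.mk I (0 - p) = c := by rw [zero_sub, map_neg, hp, neg_neg]
  have h0q : Ideal.Quotient.mk I (0 - q) = (c * v⁻¹ : (A ⧸ I)ˣ) := by
    rw [zero_sub, map_neg, hq, neg_neg]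
  have hpq : Ideal.Quotient.mk I (p - q) = (c * u * v⁻¹ : (A ⧸ I)ˣ) := by
    rw [map_sub, hp, hq]
    push_cast
    linear_combination (-(c : A ⧸ I) * (v⁻¹ : (A ⧸ I)ˣ)) * huv + (c : A ⧸ I) * v.mul_inv
  have r0p := red_num_ne_num_of_mk_eq h0p
  have r0q := red_num_ne_num_of_mk_eq h0q
  have rpq := red_num_ne_num_of_mk_eq hpq
  have hsqc : ∀ {w w' : (A ⧸ I)ˣ} (s : (A ⧸ I)ˣ), w * s ^ 2 = w' → b (sqc w) = b (sqc w') :=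
    fun s h => by rw [← h, sqc_mul_sq]
  have h := hT ⟨red_infty_ne_num 0, red_infty_ne_num p, r0p⟩ (red_infty_ne_num q) r0q rpq
  rw [hb ⟨r0p, r0q, rpq⟩, hb ⟨red_infty_ne_num p, red_infty_ne_num q, rpq⟩,
    hb ⟨red_infty_ne_num 0, red_infty_ne_num q, r0q⟩,
    hb ⟨red_infty_ne_num 0, red_infty_ne_num p, r0p⟩, sqc_tripleUnit_num_num_num h0p hpq h0q,
    sqc_tripleUnit_infty_num_num h0p, sqc_tripleUnit_infty_num_num h0q,
    sqc_tripleUnit_infty_num_num hpq] at h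
  rwa [hsqc (w := c * u * v⁻¹) (w' := c * u * v) v (by group),
    hsqc (w := c * v⁻¹) (w' := c * v) v (by group),
    ← hsqc (w := c * u) (c * v⁻¹) (by rw [pow_two]; ac_rfl)] at h

lemma Transgression.exists_map_tripleClass (t : Transgression (red I) T) :
    ∃ B : GWq ℤ (A ⧸ I) →+ V,
      ∀ {x y z}, GenTriple (red I) x y z → T x y z = B (tripleClass x y z) := by
  obtain ⟨b, hb⟩ := exists_eq_comp_sqc_tripleUnit fun γ {_ _ _} g => t.apply_smul γ g
  obtain ⟨B, hB⟩ := exists_gw_hom b (steinberg_of_isTripleCocycle t.isTripleCocycle hb)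
  exact ⟨B, fun g => (hb g).trans (hB _).symm⟩

end Universality

lemma exists_isTrivialization_pairChar_eq_one {η : SL2 A → ProjLine I → QModZ}
    {c : SL2 A → SL2 A → QModZ} (hη : IsTrivialization η c)
    (hu : ∃ u : Aˣ, IsUnit ((u : A) ^ 2 - 1)) :
    ∃ (η' : SL2 A → ProjLine I → QModZ) (hη' : IsTrivialization η' c),
      hη'.pairChar infty (num 0) = 1 := by
  obtain ⟨ε, hε⟩ := exists_sq_map_eq_pairChar hη hu
  have hη' : IsTrivialization (fun γ x => η γ x + (ε (multiplier γ x)).toAdd) c := fun γ δ x => by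
    have h := hη γ δ x
    simp only [multiplier_mul, map_mul, toAdd_mul]
    linear_combination (norm := abel) h
  refine ⟨_, hη', MonoidHom.ext fun ⟨t, ht⟩ => ?_⟩
  have h₁₀ := (mem_pairStabilizer_infty_num_zero.1 ht).2
  obtain ⟨a, ha⟩ : IsUnit (t 0 0) :=
    isUnit_of_map_unit (Ideal.Quotient.mk I) _ (diagChar I ⟨t, h₁₀⟩).isUnit
  obtain ⟨u, hu⟩ := hu
  rw [map_eq_map_diagSL mem_pairStabilizer_infty_num_zero _ hu (g := ⟨t, ht⟩) ha.symm]
  obtain ⟨w, hw⟩ : ∃ w : (A ⧸ I)ˣ, Ideal.Quotient.mk I a = w := ⟨Units.map _ a, rfl⟩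
  have h := congrArg Multiplicative.toAdd (hε hw)
  refine Multiplicative.toAdd.injective ?_
  change (η (diagSL a) (num 0) + (ε (multiplier (diagSL a) (num 0))).toAdd) -
    (η (diagSL a) infty + (ε (multiplier (diagSL a) infty)).toAdd) = 0
  rw [multiplier_diagSL_infty hw, multiplier_diagSL_num_zero hw, map_inv, toAdd_inv]
  change 2 • (ε w).toAdd = η (diagSL a) (num 0) - η (diagSL a) infty at h
  linear_combination (norm := abel) -h

/-- Every class in `H²(SL₂(A), ℚ/ℤ)` that vanishes on `Γ₀(I)` is the transgression of a triple
cocycle, hence factors through the transgression of `tripleClass`. -/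
lemma evalHomology_eq_zero_of_transgression_eq_zero
    (hres : 3 < ENat.card (IsLocalRing.ResidueField A)) {c : SL2 A → SL2 A → QModZ}
    (hc : IsTwoCocycle c) (hB : ∀ a ∈ Gamma0 I, ∀ b ∈ Gamma0 I, c a b = 0)
    (t : Transgression (red I) (tripleClass (I := I))) {x : GroupHomology.H ℤ (SL2 A) 2}
    (hx : evalHomology t.trivialization.isTwoCocycle x = 0) : evalHomology hc x = 0 := by
  obtain ⟨η₀, hη₀⟩ := exists_isTrivialization hc hB
  obtain ⟨η, hη, h₁⟩ := exists_isTrivialization_pairChar_eq_one hη₀ (exists_isUnit_sq_sub_one hres)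
  obtain ⟨β, hβ⟩ := hη.exists_primitive (r := red I) exists_smul_eq_of_red_ne h₁
  let t' : Transgression (red I) fun x y z => β y z - β x z + β x y :=
    ⟨β, η, c, fun _ => rfl, hβ, hη⟩
  obtain ⟨B, hB⟩ := t'.exists_map_tripleClass
  have hcoh : IsCohomologous t'.cocycle (t.map B).cocycle :=
    Transgression.isCohomologous (lt_trans (by norm_num) (four_lt_encard_range_red hres)) _ _
      fun g => hB g
  rw [hcoh.evalHomology_eq hc (t.map B).trivialization.isTwoCocycle]
  exact (evalHomology_map t.trivialization.isTwoCocycle B x).trans (by rw [hx, map_zero])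

end Kernel

/-- Proposition: the cokernel of `H₂(Γ₀(I)) → H₂(SL₂(A))`.
Let `A` be a local ring whose residue field has at least four elements, `I` a proper
ideal, `R := A/I`.  Then there is an exact sequence
`H₂(Γ₀(I), ℤ) → H₂(SL₂(A), ℤ) → I²(R) → 0`,
where the first map is induced by the inclusion `Γ₀(I) ⊆ SL₂(A)` and `I(R)` is the
fundamental ideal of the Grothendieck–Witt ring of `R`. -/
theorem stmt14
    (A : Type) [CommRing A] [IsLocalRing A]
    (hcard : 4 ≤ Nat.card (IsLocalRing.ResidueField A) ∨
      Infinite (IsLocalRing.ResidueField A))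
    (I : Ideal A) (hI : I ≠ ⊤) :
    ∃ g : GroupHomology.H ℤ (SL2 A) 2 →+ ↥(IfundGW ℤ (A ⧸ I) ^ 2),
      Function.Surjective g ∧
      ∀ x : GroupHomology.H ℤ (SL2 A) 2,
        (g x = 0 ↔ x ∈ Set.range (GroupHomology.Hmap ℤ (Gamma0 I).subtype 2)) := by
  have : Nontrivial (A ⧸ I) := Ideal.Quotient.nontrivial_iff.2 hI
  have hres : 3 < ENat.card (IsLocalRing.ResidueField A) := natCast_lt_enatCard hcard
  obtain ⟨t, ht⟩ := exists_transgression (ProjLine.four_lt_encard_range_red hres)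
    (ProjLine.infty (I := I)) ProjLine.isTripleCocycle_tripleClass
    fun γ _ _ _ => ProjLine.tripleClass_smul γ
  refine ⟨(evalHomology t.trivialization.isTwoCocycle).codRestrict _
    (evalHomology_mem_IfundGW_sq hres t), fun ⟨y, hy⟩ => ?_, fun x => ?_⟩
  · obtain ⟨x, hx⟩ : y ∈ (evalHomology t.trivialization.isTwoCocycle).range :=
      mem_of_forall_character fun ψ hψ => map_eq_zero_of_map_evalHomology_eq_zero
        (exists_isUnit_sq_sub_one hres) (fun x => hψ ⟨x, rfl⟩) hy
    exact ⟨x, Subtype.ext hx⟩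
  · refine Subtype.ext_iff.trans ⟨fun hx => mem_range_Hmap_subtype fun c hc hB =>
      evalHomology_eq_zero_of_transgression_eq_zero hres hc hB t hx, ?_⟩
    rintro ⟨x, rfl⟩
    refine evalHomology_Hmap_subtype _ (fun a _ b hb => ?_) x
    rw [t.trivialization a b ProjLine.infty, ProjLine.smul_infty hb, ht, ht, ht, add_zero, sub_zero]
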